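/- arXiv:2203.15907 — 2 statements merged into one kernel-verified Lean document; each statement's English description precedes it below -/
import Mathlib

section
/- For each j let G_j = g_j(X_j) be a real-valued function of X_j with ||G||_∞ := sup_j ||G_j||_{L∞} < ∞, and for k ≤ n set G_{k,n} = Σ_{j=k}^{n} G_j. Then: (i) there are constants C₁, C₂ > 0 depending only on the ellipticity constant C such that C₁ Σ_{j=k}^{n} Var(G_j) ≤ Var(G_{k,n}) ≤ C₂ Σ_{j=k}^{n} Var(G_j); and (ii) for every p > 2 there is a constant R_p depending only on p, C and ||G||_∞ such that || G_{k,n} − E[G_{k,n}] ||_{L^p} ≤ R_p (1 + √Var(G_{k,n})). -/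
open MeasureTheory ProbabilityTheory Filter Finset
open scoped ENNReal Topology

noncomputable section

namespace EdgeworthMC

variable {Ω E : Type*} [MeasurableSpace Ω] [MeasurableSpace E]

/-- The standard Gaussian density `𝔤(u) = (2π)^{-1/2} e^{-u²/2}`. -/
def gaussDensity (u : ℝ) : ℝ := (Real.sqrt (2 * Real.pi))⁻¹ * Real.exp (-u ^ 2 / 2)

/-- `UEChain μ X κ C` : the process `X` is a Markov chain (with respect to the probability
measure `μ`) with transition kernels `κ n` from the state at time `n` to the state at time
`n+1`, and the chain is uniformly elliptic with ellipticity constant `C`: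
`C⁻¹ ℙ(X_{n+1} ∈ A) ≤ ℙ(X_{n+1} ∈ A | X_n = x) ≤ C ℙ(X_{n+1} ∈ A)` for a.e. `x`. -/
def UEChain (μ : Measure Ω) (X : ℕ → Ω → E) (κ : ℕ → Kernel E E) (C : ℝ) : Prop :=
  IsProbabilityMeasure μ ∧
  (∀ n, Measurable (X n)) ∧
  (∀ n, IsMarkovKernel (κ n)) ∧
  (∀ n (A : Set E), MeasurableSet A →
      (μ[fun ω => A.indicator (fun _ => (1 : ℝ)) (X (n + 1) ω) |
          ⨆ i : Fin (n + 1), MeasurableSpace.comap (X i) (inferInstance : MeasurableSpace E)]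
        =ᵐ[μ] fun ω => (κ n (X n ω) A).toReal)) ∧
  (∀ n (A : Set E), MeasurableSet A → ∀ᵐ ω ∂μ,
      κ n (X n ω) A ≤ ENNReal.ofReal C * Measure.map (X (n + 1)) μ A ∧
      Measure.map (X (n + 1)) μ A ≤ ENNReal.ofReal C * κ n (X n ω) A)

/-- Partial sums `S_N = ∑_{n=1}^N f_n(X_n)`. -/
def S (X : ℕ → Ω → E) (f : ℕ → E → ℤ) (N : ℕ) (ω : Ω) : ℤ :=
  ∑ n ∈ Finset.Icc 1 N, f n (X n ω)

/-- `V_N = Var(S_N)`. -/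
def VN (μ : Measure Ω) (X : ℕ → Ω → E) (f : ℕ → E → ℤ) (N : ℕ) : ℝ :=
  variance (fun ω => ((S X f N ω : ℝ))) μ

/-- `σ_N = √V_N`. -/
def sigN (μ : Measure Ω) (X : ℕ → Ω → E) (f : ℕ → E → ℤ) (N : ℕ) : ℝ :=
  Real.sqrt (VN μ X f N)

/-- `a_N = 𝔼(S_N)`. -/
def meanS (μ : Measure Ω) (X : ℕ → Ω → E) (f : ℕ → E → ℤ) (N : ℕ) : ℝ :=
  ∫ ω, ((S X f N ω : ℝ)) ∂μ

/-- The second largest value among the (finitely many) values of `p`, counted with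
multiplicity: it equals `min_j max_{j' ≠ j} p j'`. -/
def secondLargest {ι : Type*} (p : ι → ℝ) : ℝ := ⨅ j, sSup (p '' {j}ᶜ)

/-- `q_n(m)` : the second largest value among `ℙ(Y_n ≡ j mod m)`, `j = 0,…,m-1`. -/
def qres (μ : Measure Ω) (X : ℕ → Ω → E) (f : ℕ → E → ℤ) (n m : ℕ) : ℝ :=
  secondLargest (fun j : ZMod m => (μ {ω | ((f n (X n ω) : ZMod m)) = j}).toReal)

/-- `M_N = min_{2 ≤ m ≤ 2K} ∑_{n=1}^N q_n(m)`. -/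
def MN (μ : Measure Ω) (X : ℕ → Ω → E) (f : ℕ → E → ℤ) (K N : ℕ) : ℝ :=
  sInf ((fun m => ∑ n ∈ Finset.Icc 1 N, qres μ X f n m) '' (Set.Icc 2 (2 * K)))

/-- `S_N` obeys the Edgeworth expansion of order `r` : there are polynomials `P_{b,N}`,
with coefficients uniformly bounded in `N` and degrees not depending on `N`, such that
uniformly in `k ∈ ℤ`,
`ℙ(S_N = k) = ∑_{b=1}^r σ_N^{-b} P_{b,N}(k_N) 𝔤(k_N) + o(σ_N^{-r})`
where `k_N = (k - 𝔼 S_N)/σ_N`. -/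
def Edgeworth (μ : Measure Ω) (X : ℕ → Ω → E) (f : ℕ → E → ℤ) (r : ℕ) : Prop :=
  ∃ (D : ℕ) (Cb : ℝ) (P : ℕ → ℕ → Polynomial ℝ),
    (∀ b N, (P b N).natDegree ≤ D) ∧
    (∀ b N i, |(P b N).coeff i| ≤ Cb) ∧
    ∀ ε > 0, ∃ N₀, ∀ N ≥ N₀, ∀ k : ℤ,
      |(μ {ω | S X f N ω = k}).toReal -
          ∑ b ∈ Finset.Icc 1 r, (sigN μ X f N)⁻¹ ^ b *
            (P b N).eval (((k : ℝ) - meanS μ X f N) / sigN μ X f N) *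
            gaussDensity (((k : ℝ) - meanS μ X f N) / sigN μ X f N)|
        ≤ ε * (sigN μ X f N)⁻¹ ^ r

/-- The σ-algebra generated by `X_{j 1}, …, X_{j ℓ}`. -/
def sigmaOf (X : ℕ → Ω → E) {ℓ : ℕ} (j : Fin ℓ → ℕ) : MeasurableSpace Ω :=
  ⨆ i : Fin ℓ, MeasurableSpace.comap (X (j i)) (inferInstance : MeasurableSpace E)

/-- Conditional probability of the event `s` given the σ-algebra `m`. -/
def condProb (μ : Measure Ω) (m : MeasurableSpace Ω) (s : Set Ω) : Ω → ℝ :=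
  μ[s.indicator (fun _ => (1 : ℝ)) | m]

/-- `S_N` obeys the Edgeworth expansion of order `r` in a conditionally stable way:
for every `ℓ`, the order `r` Edgeworth expansion holds for the conditional law of `S_N`
given `X_{j_1},…,X_{j_ℓ}`, with error term `o_ℓ(σ_N^{-r})` and polynomial coefficient
bounds depending only on `ℓ` (and `r`), uniformly over all choices of indices
`1 ≤ j_1,…,j_ℓ ≤ N`. -/
def CondStableEdgeworth (μ : Measure Ω) (X : ℕ → Ω → E) (f : ℕ → E → ℤ) (r : ℕ) : Prop :=
  ∀ ℓ : ℕ, ∃ (D : ℕ) (Cb : ℝ), ∀ ε > 0, ∃ N₀, ∀ N ≥ N₀,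
    ∀ j : Fin ℓ → ℕ, (∀ i, j i ∈ Finset.Icc 1 N) →
      ∃ P : ℕ → Ω → Polynomial ℝ,
        (∀ b ω, (P b ω).natDegree ≤ D) ∧
        (∀ b ω i, |(P b ω).coeff i| ≤ Cb) ∧
        ∀ᵐ ω ∂μ, ∀ k : ℤ,
          |condProb μ (sigmaOf X j) {ω' | S X f N ω' = k} ω -
              ∑ b ∈ Finset.Icc 1 r, (sigN μ X f N)⁻¹ ^ b *
                (P b ω).eval (((k : ℝ) -
                    (μ[fun ω' => ((S X f N ω' : ℝ)) | sigmaOf X j]) ω) / sigN μ X f N) *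
                gaussDensity (((k : ℝ) -
                    (μ[fun ω' => ((S X f N ω' : ℝ)) | sigmaOf X j]) ω) / sigN μ X f N)|
            ≤ ε * (sigN μ X f N)⁻¹ ^ r

/-- `t` is a resonant point: `t = 2πl/m` with `0 < m ≤ 2K`, `0 ≤ l < m`. -/
def IsResonant (K : ℕ) (t : ℝ) : Prop :=
  ∃ l m : ℕ, 0 < m ∧ m ≤ 2 * K ∧ l < m ∧ t = 2 * Real.pi * l / m

/-- The conditional characteristic function `𝔼[e^{itS_N} | X_{j_1},…,X_{j_ℓ}]`. -/
def condChar (μ : Measure Ω) (X : ℕ → Ω → E) (f : ℕ → E → ℤ) (t : ℝ) (N : ℕ)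
    {ℓ : ℕ} (j : Fin ℓ → ℕ) : Ω → ℂ :=
  μ[fun ω => Complex.exp (Complex.I * (t : ℂ) * ((S X f N ω : ℤ) : ℂ)) | sigmaOf X j]

end EdgeworthMC

namespace EdgeworthMC

section BoundedMeasurable

/-- Bounded measurable real functions. -/
def BddMeas {α : Type*} (m : MeasurableSpace α) (f : α → ℝ) : Prop :=
  Measurable[m] f ∧ ∃ b, ∀ x, |f x| ≤ b

variable {α β : Type*} {m : MeasurableSpace α} {f g : α → ℝ}

lemma BddMeas.const (c : ℝ) : BddMeas m (fun _ => c) :=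
  ⟨measurable_const, |c|, fun _ => le_rfl⟩

lemma BddMeas.add (hf : BddMeas m f) (hg : BddMeas m g) : BddMeas m (fun x => f x + g x) := by
  obtain ⟨hf, b, hb⟩ := hf
  obtain ⟨hg, c, hc⟩ := hg
  exact ⟨hf.add hg, b + c, fun x => (abs_add_le _ _).trans (add_le_add (hb x) (hc x))⟩

lemma BddMeas.mul (hf : BddMeas m f) (hg : BddMeas m g) : BddMeas m (fun x => f x * g x) := by
  obtain ⟨hf, b, hb⟩ := hf
  obtain ⟨hg, c, hc⟩ := hg
  refine ⟨hf.mul hg, b * c, fun x => ?_⟩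
  rw [abs_mul]
  exact mul_le_mul (hb x) (hc x) (abs_nonneg _) ((abs_nonneg _).trans (hb x))

lemma BddMeas.const_mul (c : ℝ) (hf : BddMeas m f) : BddMeas m (fun x => c * f x) :=
  (BddMeas.const c).mul hf

lemma BddMeas.sub (hf : BddMeas m f) (hg : BddMeas m g) : BddMeas m (fun x => f x - g x) := by
  simpa [sub_eq_add_neg] using hf.add (hg.const_mul (-1))

lemma BddMeas.sq (hf : BddMeas m f) : BddMeas m (fun x => f x ^ 2) := by
  simpa [pow_two] using hf.mul hf

lemma BddMeas.exp (hf : BddMeas m f) : BddMeas m (fun x => Real.exp (f x)) := by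
  obtain ⟨hf, b, hb⟩ := hf
  refine ⟨hf.exp, Real.exp b, fun x => ?_⟩
  rw [abs_of_pos (Real.exp_pos _)]
  exact Real.exp_le_exp.2 ((le_abs_self _).trans (hb x))

lemma BddMeas.sum {ι : Type*} (s : Finset ι) {F : ι → α → ℝ} (hF : ∀ i ∈ s, BddMeas m (F i)) :
    BddMeas m (fun x => ∑ i ∈ s, F i x) := by
  classical
  induction s using Finset.induction_on with
  | empty => simpa using BddMeas.const 0
  | insert a s ha ih =>
    simp only [Finset.sum_insert ha]
    exact (hF a (Finset.mem_insert_self a s)).add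
      (ih fun i hi => hF i (Finset.mem_insert_of_mem hi))

lemma BddMeas.comp {mβ : MeasurableSpace β} {X : β → α} (hf : BddMeas m f)
    (hX : Measurable[mβ, m] X) : BddMeas mβ (fun ω => f (X ω)) :=
  ⟨hf.1.comp hX, hf.2.choose, fun ω => hf.2.choose_spec (X ω)⟩

lemma BddMeas.mono {m' : MeasurableSpace α} (hf : BddMeas m f) (h : m ≤ m') : BddMeas m' f :=
  ⟨hf.1.mono h le_rfl, hf.2⟩

lemma BddMeas.integrable (hf : BddMeas m f) (μ : Measure α) [IsFiniteMeasure μ] :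
    Integrable f μ := by
  obtain ⟨hf, b, hb⟩ := hf
  exact Integrable.of_bound hf.aestronglyMeasurable b (ae_of_all _ hb)

lemma BddMeas.transition {mβ : MeasurableSpace β} (hf : BddMeas m f) (κ : Kernel β α)
    [IsMarkovKernel κ] : BddMeas mβ (fun x => ∫ y, f y ∂κ x) := by
  obtain ⟨hf, b, hb⟩ := hf
  refine ⟨hf.stronglyMeasurable.integral_kernel.measurable, b, fun x => ?_⟩
  simpa using norm_integral_le_of_norm_le_const (μ := κ x) (f := f) (ae_of_all _ hb)

lemma BddMeas.integral_sub_const_sq (hf : BddMeas m f) (ν : Measure α) [IsProbabilityMeasure ν]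
    (t : ℝ) : ∫ x, (f x - t) ^ 2 ∂ν = ∫ x, f x ^ 2 ∂ν - 2 * t * ∫ x, f x ∂ν + t ^ 2 := by
  have : ∀ x, (f x - t) ^ 2 = f x ^ 2 - 2 * t * f x + t ^ 2 := fun x => by ring
  simp_rw [this]
  rw [integral_add ((hf.sq.sub (hf.const_mul _)).integrable ν) (integrable_const _),
    integral_sub (hf.sq.integrable ν) ((hf.const_mul _).integrable ν), integral_const_mul]
  simp

end BoundedMeasurable

/-- The σ-algebra generated by `X_0, …, X_n`. -/
abbrev past {Ω E : Type*} [mE : MeasurableSpace E] (X : ℕ → Ω → E) (n : ℕ) : MeasurableSpace Ω :=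
  ⨆ i : Fin (n + 1), MeasurableSpace.comap (X i) mE

lemma measurable_past {Ω E : Type*} [mE : MeasurableSpace E] (X : ℕ → Ω → E) {i n : ℕ}
    (h : i ≤ n) : Measurable[past X n] (X i) := by
  have : MeasurableSpace.comap (X i) mE ≤ past X n :=
    le_iSup (fun i : Fin (n + 1) => MeasurableSpace.comap (X i) mE) ⟨i, by omega⟩
  exact (comap_measurable (X i)).mono this le_rfl

lemma bddMeas_partialSum {Ω E : Type*} [mE : MeasurableSpace E] (X : ℕ → Ω → E) {h : ℕ → E → ℝ}
    (hh : ∀ j, BddMeas mE (h j)) (k n : ℕ) :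
    BddMeas (past X n) (fun ω => ∑ i ∈ Finset.Ico k (n + 1), h i (X i ω)) :=
  BddMeas.sum _ fun i hi => (hh i).comp
    (measurable_past X (by have := (Finset.mem_Ico.1 hi).2; omega))

lemma inv_le_of_sq_bound {C a b : ℝ} (hC : 1 < C) (ha : 0 ≤ a) (hb : b ≤ (1 - C⁻¹) ^ 2 * a) :
    C⁻¹ * a ≤ a - b := by
  have h1 := inv_lt_one_of_one_lt₀ hC
  have h2 : 0 < C⁻¹ := by positivity
  have : C⁻¹ ≤ 1 - (1 - C⁻¹) ^ 2 := by nlinarith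
  nlinarith

lemma exp_le_one_add_add_sq {x : ℝ} (hx : |x| ≤ 1) : Real.exp x ≤ 1 + x + x ^ 2 := by
  have := (abs_le.1 (Real.abs_exp_sub_one_sub_id_le hx)).2
  linarith

lemma sum_shift_le {a : ℕ → ℝ} (ha : ∀ i, 0 ≤ a i) {k n : ℕ} (hkn : k ≤ n) (hn : a (n + 1) = 0) :
    ∑ i ∈ Finset.Ico k (n + 1), a (i + 1) ≤ ∑ i ∈ Finset.Ico k (n + 1), a i := by
  rw [Finset.sum_Ico_add' a k (n + 1) 1, Finset.sum_Ico_succ_top (show k + 1 ≤ n + 1 by omega), hn,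
    add_zero]
  exact Finset.sum_le_sum_of_subset_of_nonneg (Finset.Ico_subset_Ico_left (by omega))
    fun i _ _ => ha i

section Corrector

variable {Ω E : Type*} [MeasurableSpace E] {X : ℕ → Ω → E} {κ : ℕ → Kernel E E}

/-- The sum `∑_{i=j}^{j+m-1} E[h_i(X_i) | X_j = x]`. -/
def corrector (κ : ℕ → Kernel E E) (h : ℕ → E → ℝ) : ℕ → ℕ → E → ℝ
  | 0, _ => fun _ => 0
  | m + 1, j => fun x => h j x + ∫ y, corrector κ h m (j + 1) y ∂κ j x

lemma corrector_eq (κ : ℕ → Kernel E E) (h : ℕ → E → ℝ) {n j : ℕ} (hj : j ≤ n) (x : E) :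
    corrector κ h (n + 1 - j) j x = h j x + ∫ y, corrector κ h (n + 1 - (j + 1)) (j + 1) y ∂κ j x := by
  rw [show n + 1 - j = (n + 1 - (j + 1)) + 1 by omega, corrector]

/-- The martingale part of the sum: `∑_{i=k}^{j-1} h_i(X_i) + E[∑_{i=j}^n h_i(X_i) | X_j]`. -/
def partialMart (X : ℕ → Ω → E) (κ : ℕ → Kernel E E) (h : ℕ → E → ℝ) (k n j : ℕ) (ω : Ω) : ℝ :=
  ∑ i ∈ Finset.Ico k j, h i (X i ω) + corrector κ h (n + 1 - j) j (X j ω)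

lemma partialMart_eq (h : ℕ → E → ℝ) {k n j : ℕ} (hk : k ≤ j) (hj : j ≤ n) (ω : Ω) :
    partialMart X κ h k n j ω = ∑ i ∈ Finset.Ico k (j + 1), h i (X i ω) +
      ∫ y, corrector κ h (n + 1 - (j + 1)) (j + 1) y ∂κ j (X j ω) := by
  rw [partialMart, corrector_eq κ h hj, Finset.sum_Ico_succ_top hk]
  ring

lemma partialMart_last (h : ℕ → E → ℝ) (k n : ℕ) (ω : Ω) :
    partialMart X κ h k n (n + 1) ω = ∑ i ∈ Finset.Icc k n, h i (X i ω) := by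
  simp [partialMart, corrector, Finset.Ico_add_one_right_eq_Icc]

end Corrector

section Chain

variable {Ω E : Type*} [mΩ : MeasurableSpace Ω] [mE : MeasurableSpace E]
  {μ : Measure Ω} {X : ℕ → Ω → E} {κ : ℕ → Kernel E E} {C : ℝ}

lemma UEChain.past_le (h : UEChain μ X κ C) (n : ℕ) : past X n ≤ mΩ :=
  iSup_le fun i => (h.2.1 i).comap_le

lemma UEChain.setIntegral_transition (h : UEChain μ X κ C) (n : ℕ) {f : E → ℝ}
    (hf : BddMeas mE f) {s : Set Ω} (hs : MeasurableSet[past X n] s) :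
    ∫ ω in s, f (X (n + 1) ω) ∂μ = ∫ ω in s, ∫ y, f y ∂κ n (X n ω) ∂μ := by
  obtain ⟨_, hX, hκ, hM, -⟩ := id h
  have hm := h.past_le n
  have hs' := hm s hs
  have key : (μ.restrict s).map (X (n + 1)) = κ n ∘ₘ ((μ.restrict s).map (X n)) := by
    ext A hA
    rw [Measure.bind_apply hA (κ n).aemeasurable, lintegral_map ((κ n).measurable_coe hA) (hX n),
      Measure.map_apply (hX _) hA]
    have hind : BddMeas mE (A.indicator fun _ => (1 : ℝ)) :=
      ⟨measurable_const.indicator hA, 1, fun x => by by_cases hx : x ∈ A <;> simp [hx]⟩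
    have h1 := setIntegral_condExp (μ := μ) hm ((hind.comp (hX (n + 1))).integrable μ) hs
    rw [setIntegral_congr_ae hs' ((hM n A hA).mono fun ω hω _ => hω),
      integral_toReal (f := fun ω => κ n (X n ω) A) ((κ n).measurable_coe hA |>.comp (hX n)).aemeasurable
        (ae_of_all _ fun ω => measure_lt_top _ _)] at h1
    have h2 : ∫ ω in s, A.indicator (fun _ => (1 : ℝ)) (X (n + 1) ω) ∂μ =
        ((μ.restrict s) (X (n + 1) ⁻¹' A)).toReal := by
      change ∫ ω in s, (X (n + 1) ⁻¹' A).indicator (fun _ => (1 : ℝ)) ω ∂μ = _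
      rw [integral_indicator_const _ (hX (n + 1) hA)]
      simp [Measure.real]
    rw [h2, ENNReal.toReal_eq_toReal_iff' ?_ (measure_ne_top _ _)] at h1
    · exact h1.symm
    · refine ((lintegral_mono (g := fun _ => 1) fun ω => prob_le_one).trans_lt ?_).ne
      simp
  have hint : Integrable f ((μ.restrict s).map (X (n + 1))) := hf.integrable _
  have h3 : ∫ y, f y ∂((μ.restrict s).map (X (n + 1))) =
      ∫ x, ∫ y, f y ∂κ n x ∂((μ.restrict s).map (X n)) := by
    rw [key] at hint ⊢
    rw [Measure.comp_eq_comp_const_apply] at hint ⊢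
    rw [Kernel.integral_comp hint, Kernel.const_apply]
  rwa [integral_map (hX _).aemeasurable hf.1.aestronglyMeasurable,
    integral_map (hX _).aemeasurable (hf.transition (κ n)).1.aestronglyMeasurable] at h3

lemma UEChain.integral_mul_transition (h : UEChain μ X κ C) (n : ℕ) {f : E → ℝ}
    (hf : BddMeas mE f) {Φ : Ω → ℝ} (hΦ : BddMeas (past X n) Φ) :
    ∫ ω, Φ ω * f (X (n + 1) ω) ∂μ = ∫ ω, Φ ω * ∫ y, f y ∂κ n (X n ω) ∂μ := by
  obtain ⟨_, hX, hκ, -, -⟩ := id h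
  have hm := h.past_le n
  have hfX : BddMeas _ (fun ω => f (X (n + 1) ω)) := hf.comp (hX _)
  have hT : BddMeas (past X n) (fun ω => ∫ y, f y ∂κ n (X n ω)) :=
    (hf.transition (κ n)).comp (measurable_past X le_rfl)
  have h1 := ae_eq_condExp_of_forall_setIntegral_eq (μ := μ) hm (hfX.integrable μ)
    (g := fun ω => ∫ y, f y ∂κ n (X n ω))
    (fun s _ _ => ((hT.mono hm).integrable μ).integrableOn)
    (fun s hs _ => (h.setIntegral_transition n hf hs).symm)
    hT.1.stronglyMeasurable.aestronglyMeasurable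
  have h2 := condExp_mul_of_stronglyMeasurable_left (μ := μ) hΦ.1.stronglyMeasurable
    (((hΦ.mono hm).mul hfX).integrable μ) (hfX.integrable μ)
  change ∫ ω, ((Φ * fun ω => f (X (n + 1) ω) : Ω → ℝ)) ω ∂μ = _
  rw [← integral_condExp hm]
  refine integral_congr_ae ?_
  filter_upwards [h1, h2] with ω h1 h2
  rw [h2, Pi.mul_apply, ← h1]

lemma UEChain.integral_transition (h : UEChain μ X κ C) (n : ℕ) {f : E → ℝ}
    (hf : BddMeas mE f) : ∫ ω, ∫ y, f y ∂κ n (X n ω) ∂μ = ∫ ω, f (X (n + 1) ω) ∂μ := by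
  simpa using (h.integral_mul_transition n hf (BddMeas.const 1)).symm

lemma UEChain.lintegral_transition_bounds (h : UEChain μ X κ C) (n : ℕ) {f : E → ℝ≥0∞}
    (hf : Measurable f) : ∀ᵐ ω ∂μ,
      ∫⁻ y, f y ∂κ n (X n ω) ≤ ENNReal.ofReal C * ∫⁻ ω', f (X (n + 1) ω') ∂μ ∧
      ∫⁻ ω', f (X (n + 1) ω') ∂μ ≤ ENNReal.ofReal C * ∫⁻ y, f y ∂κ n (X n ω) := by
  obtain ⟨_, hX, hκ, -, hE⟩ := id h
  refine Measurable.ennreal_induction (motive := fun f => ∀ᵐ ω ∂μ,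
      ∫⁻ y, f y ∂κ n (X n ω) ≤ ENNReal.ofReal C * ∫⁻ ω', f (X (n + 1) ω') ∂μ ∧
      ∫⁻ ω', f (X (n + 1) ω') ∂μ ≤ ENNReal.ofReal C * ∫⁻ y, f y ∂κ n (X n ω))
    (fun c s hs => ?_) (fun f g _ hf hg ihf ihg => ?_) (fun f hf hmono ih => ?_) hf
  · filter_upwards [hE n s hs] with ω hω
    rw [← lintegral_map (measurable_const.indicator hs) (hX (n + 1))]
    simp only [lintegral_indicator_const hs]
    constructor
    · calc _ ≤ c * (ENNReal.ofReal C * Measure.map (X (n + 1)) μ s) := by gcongr; exact hω.1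
        _ = _ := by ring
    · calc _ ≤ c * (ENNReal.ofReal C * κ n (X n ω) s) := by gcongr; exact hω.2
        _ = _ := by ring
  · filter_upwards [ihf, ihg] with ω h1 h2
    simp only [Pi.add_apply]
    rw [lintegral_add_left hf, lintegral_add_left (f := fun ω => f (X (n + 1) ω)) (hf.comp (hX (n + 1))),
      mul_add, mul_add]
    exact ⟨add_le_add h1.1 h2.1, add_le_add h1.2 h2.2⟩
  · filter_upwards [ae_all_iff.2 ih] with ω hω
    rw [lintegral_iSup hf hmono, lintegral_iSup (f := fun i ω => f i (X (n + 1) ω))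
      (fun i => (hf i).comp (hX (n + 1)))
      (fun i j hij ω => hmono hij _), ENNReal.mul_iSup, ENNReal.mul_iSup]
    exact ⟨iSup_mono fun i => (hω i).1, iSup_mono fun i => (hω i).2⟩

lemma UEChain.transition_bounds (h : UEChain μ X κ C) (hC : 0 ≤ C) (n : ℕ) {f : E → ℝ}
    (hf : BddMeas mE f) (hf0 : ∀ x, 0 ≤ f x) : ∀ᵐ ω ∂μ,
      ∫ y, f y ∂κ n (X n ω) ≤ C * ∫ ω', f (X (n + 1) ω') ∂μ ∧
      ∫ ω', f (X (n + 1) ω') ∂μ ≤ C * ∫ y, f y ∂κ n (X n ω) := by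
  obtain ⟨_, hX, hκ, -, -⟩ := id h
  filter_upwards [h.lintegral_transition_bounds n hf.1.ennreal_ofReal] with ω hω
  rw [← ofReal_integral_eq_lintegral_ofReal (hf.integrable _) (ae_of_all _ hf0),
    ← ofReal_integral_eq_lintegral_ofReal ((hf.comp (hX (n + 1))).integrable _)
      (ae_of_all _ fun _ => hf0 _), ← ENNReal.ofReal_mul hC, ← ENNReal.ofReal_mul hC,
    ENNReal.ofReal_le_ofReal_iff (mul_nonneg hC (integral_nonneg fun _ => hf0 _)),
    ENNReal.ofReal_le_ofReal_iff (mul_nonneg hC (integral_nonneg fun _ => hf0 _))] at hω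
  exact hω

lemma UEChain.ae_ae_transition (h : UEChain μ X κ C) (n : ℕ) {p : E → Prop}
    (hp : MeasurableSet {x | p x}) (hpX : ∀ᵐ ω ∂μ, p (X (n + 1) ω)) :
    ∀ᵐ ω ∂μ, ∀ᵐ y ∂κ n (X n ω), p y := by
  filter_upwards [h.2.2.2.2 n _ hp.compl] with ω hω
  have h0 : Measure.map (X (n + 1)) μ {x | p x}ᶜ = 0 := by
    rw [Measure.map_apply (h.2.1 _) hp.compl]
    exact hpX
  rw [h0, mul_zero] at hω
  exact le_antisymm hω.1 zero_le

/-- Transition operators contract the mean-zero part of `L²`. -/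
lemma UEChain.integral_sq_transition_le (h : UEChain μ X κ C) (hC : 1 < C) (n : ℕ) {f : E → ℝ}
    (hf : BddMeas mE f) (hf0 : ∫ ω, f (X (n + 1) ω) ∂μ = 0) :
    ∫ ω, (∫ y, f y ∂κ n (X n ω)) ^ 2 ∂μ ≤ (1 - C⁻¹) ^ 2 * ∫ ω, f (X (n + 1) ω) ^ 2 ∂μ := by
  obtain ⟨_, hX, hκ, -, -⟩ := id h
  have hC0 : 0 < C := by linarith
  have hfX := hf.comp (hX (n + 1))
  set v := ∫ ω, f (X (n + 1) ω) ^ 2 ∂μ with hv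
  have hpt : ∀ᵐ ω ∂μ, (∫ y, f y ∂κ n (X n ω)) ^ 2 ≤
      (1 - C⁻¹) * (∫ y, f y ^ 2 ∂κ n (X n ω) - C⁻¹ * v) := by
    have hall : ∀ᵐ ω ∂μ, ∀ q : ℚ, ∫ ω', (f (X (n + 1) ω') - q) ^ 2 ∂μ ≤
        C * ∫ y, (f y - q) ^ 2 ∂κ n (X n ω) := by
      refine ae_all_iff.2 fun q => ?_
      filter_upwards [h.transition_bounds hC0.le n (hf.sub (.const (q : ℝ))).sq
        (fun _ => sq_nonneg _)] with ω hω using hω.2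
    filter_upwards [hall] with ω hω
    have hreal : ∀ t : ℝ, v + t ^ 2 ≤
        C * (∫ y, f y ^ 2 ∂κ n (X n ω) - 2 * t * ∫ y, f y ∂κ n (X n ω) + t ^ 2) := by
      intro t
      refine Rat.denseRange_cast.induction_on t
        (isClosed_le (by fun_prop) (by fun_prop)) fun q => ?_
      have := hω q
      rw [hfX.integral_sub_const_sq, hf.integral_sub_const_sq, hf0] at this
      simpa [hv] using this
    set M := ∫ y, f y ∂κ n (X n ω)
    set s := ∫ y, f y ^ 2 ∂κ n (X n ω)
    have hθ : 0 < 1 - C⁻¹ := by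
      have := inv_lt_one_of_one_lt₀ hC
      linarith
    have := hreal (M / (1 - C⁻¹))
    have h2 : C⁻¹ * (v + (M / (1 - C⁻¹)) ^ 2) ≤
        s - 2 * (M / (1 - C⁻¹)) * M + (M / (1 - C⁻¹)) ^ 2 := by
      rw [inv_mul_le_iff₀ hC0]; exact this
    have h3 : M ^ 2 / (1 - C⁻¹) ≤ s - C⁻¹ * v := by
      have : 2 * (M / (1 - C⁻¹)) * M - (1 - C⁻¹) * (M / (1 - C⁻¹)) ^ 2 = M ^ 2 / (1 - C⁻¹) := by
        field_simp; ring
      linarith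
    rw [div_le_iff₀ hθ] at h3
    linarith
  have hsqT := (hf.sq.transition (κ n)).comp (hX n)
  calc _ ≤ ∫ ω, (1 - C⁻¹) * (∫ y, f y ^ 2 ∂κ n (X n ω) - C⁻¹ * v) ∂μ :=
        integral_mono_ae (((hf.transition (κ n)).comp (hX n)).sq.integrable μ)
          (((hsqT.sub (.const _)).const_mul _).integrable μ) hpt
    _ = _ := by
      rw [integral_const_mul, integral_sub (hsqT.integrable μ) (integrable_const _),
        h.integral_transition n hf.sq]
      simp only [integral_const, probReal_univ, one_smul]
      rw [← hv]
      ring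

/-- Transition operators contract the mean-zero part of `L∞`. -/
lemma UEChain.abs_transition_le (h : UEChain μ X κ C) (hC : 1 < C) (n : ℕ) {f : E → ℝ}
    (hf : BddMeas mE f) (hf0 : ∫ ω, f (X (n + 1) ω) ∂μ = 0) {b : ℝ}
    (hb : ∀ᵐ ω ∂μ, |f (X (n + 1) ω)| ≤ b) :
    ∀ᵐ ω ∂μ, |∫ y, f y ∂κ n (X n ω)| ≤ (1 - C⁻¹) * b := by
  obtain ⟨_, hX, hκ, -, -⟩ := id h
  have hC0 : 0 < C := by linarith
  have upper : ∀ g : E → ℝ, BddMeas mE g → ∫ ω, g (X (n + 1) ω) ∂μ = 0 →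
      (∀ᵐ ω ∂μ, g (X (n + 1) ω) ≤ b) → ∀ᵐ ω ∂μ, ∫ y, g y ∂κ n (X n ω) ≤ (1 - C⁻¹) * b := by
    intro g hg hg0 hgb
    have hpos : BddMeas mE (fun x => max (b - g x) 0) := by
      obtain ⟨hm, c, hc⟩ := (BddMeas.const b).sub hg
      refine ⟨hm.max measurable_const, c, fun x => ?_⟩
      rw [abs_of_nonneg (le_max_right _ _)]
      exact max_le ((le_abs_self _).trans (hc x)) ((abs_nonneg _).trans (hc x))
    filter_upwards [h.transition_bounds hC0.le n hpos (fun _ => le_max_right _ _),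
      h.ae_ae_transition n (p := fun x => g x ≤ b) (measurableSet_le hg.1 measurable_const) hgb]
      with ω hω hae
    have e1 : ∫ ω', max (b - g (X (n + 1) ω')) 0 ∂μ = b := by
      rw [integral_congr_ae (g := fun ω' => b - g (X (n + 1) ω'))
        (by filter_upwards [hgb] with ω' h'; exact max_eq_left (by linarith)),
        integral_sub (integrable_const _) ((hg.comp (hX _)).integrable μ), hg0]
      simp
    have e2 : ∫ y, max (b - g y) 0 ∂κ n (X n ω) = b - ∫ y, g y ∂κ n (X n ω) := by
      rw [integral_congr_ae (g := fun y => b - g y)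
        (by filter_upwards [hae] with ω' h'; exact max_eq_left (by linarith)),
        integral_sub (integrable_const _) (hg.integrable _)]
      simp
    have := hω.2
    rw [e1, e2, ← inv_mul_le_iff₀ hC0] at this
    linarith
  filter_upwards [upper f hf hf0 (hb.mono fun ω hω => (le_abs_self _).trans hω),
    upper (fun x => -f x) (by simpa using hf.const_mul (-1)) (by rw [integral_neg, hf0, neg_zero])
      (hb.mono fun ω hω => (neg_le_abs _).trans hω)] with ω h1 h2
  rw [integral_neg] at h2
  exact abs_le'.2 ⟨h1, h2⟩

lemma UEChain.integral_sq_add (h : UEChain μ X κ C) (n : ℕ) {f : E → ℝ} (hf : BddMeas mE f)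
    {T : Ω → ℝ} (hT : BddMeas (past X n) T) :
    ∫ ω, (T ω + f (X (n + 1) ω)) ^ 2 ∂μ =
      ∫ ω, (T ω + ∫ y, f y ∂κ n (X n ω)) ^ 2 ∂μ +
        (∫ ω, f (X (n + 1) ω) ^ 2 ∂μ - ∫ ω, (∫ y, f y ∂κ n (X n ω)) ^ 2 ∂μ) := by
  obtain ⟨_, hX, hκ, -, -⟩ := id h
  have hT' := hT.mono (h.past_le n)
  have expand : ∀ F : Ω → ℝ, BddMeas mΩ F → ∫ ω, (T ω + F ω) ^ 2 ∂μ =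
      ∫ ω, T ω ^ 2 ∂μ + 2 * ∫ ω, T ω * F ω ∂μ + ∫ ω, F ω ^ 2 ∂μ := by
    intro F hF
    have : ∀ ω, (T ω + F ω) ^ 2 = T ω ^ 2 + 2 * (T ω * F ω) + F ω ^ 2 := fun ω => by ring
    simp_rw [this]
    rw [integral_add ((hT'.sq.add ((hT'.mul hF).const_mul 2)).integrable μ) (hF.sq.integrable μ),
      integral_add (hT'.sq.integrable μ) (((hT'.mul hF).const_mul 2).integrable μ),
      integral_const_mul]
  rw [expand _ (hf.comp (hX _)), expand _ ((hf.transition (κ n)).comp (hX n)),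
    h.integral_mul_transition n hf hT]
  ring

lemma UEChain.integral_exp_add_le (h : UEChain μ X κ C) (hC : 0 ≤ C) (n : ℕ) {f : E → ℝ}
    (hf : BddMeas mE f) (hf1 : ∀ᵐ ω ∂μ, |f (X (n + 1) ω)| ≤ 1)
    {T : Ω → ℝ} (hT : BddMeas (past X n) T) :
    ∫ ω, Real.exp (T ω + f (X (n + 1) ω)) ∂μ ≤
      Real.exp (C * ∫ ω, f (X (n + 1) ω) ^ 2 ∂μ) *
        ∫ ω, Real.exp (T ω + ∫ y, f y ∂κ n (X n ω)) ∂μ := by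
  obtain ⟨_, hX, hκ, -, -⟩ := id h
  have hT' := hT.mono (h.past_le n)
  simp_rw [Real.exp_add]
  rw [h.integral_mul_transition n hf.exp hT.exp, ← integral_const_mul]
  refine integral_mono_ae ((hT'.exp.mul ((hf.exp.transition (κ n)).comp (hX n))).integrable μ)
    (((hT'.exp.mul ((hf.transition (κ n)).comp (hX n)).exp).const_mul _).integrable μ) ?_
  filter_upwards [h.ae_ae_transition n (p := fun x => |f x| ≤ 1)
    (measurableSet_le hf.1.abs measurable_const) hf1,
    h.transition_bounds hC n hf.sq (fun _ => sq_nonneg _)] with ω h1 h2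
  have h3 : ∫ y, Real.exp (f y) ∂κ n (X n ω) ≤
      1 + ∫ y, f y ∂κ n (X n ω) + ∫ y, f y ^ 2 ∂κ n (X n ω) := by
    have h4 := integral_mono_ae (hf.exp.integrable (κ n (X n ω)))
      ((((BddMeas.const 1).add hf).add hf.sq).integrable _)
      (h1.mono fun y hy => exp_le_one_add_add_sq hy)
    rwa [integral_add (((BddMeas.const 1).add hf).integrable _) (hf.sq.integrable _),
      integral_add (integrable_const _) (hf.integrable _), integral_const, probReal_univ,
      one_smul] at h4
  have h5 : ∫ y, Real.exp (f y) ∂κ n (X n ω) ≤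
      Real.exp (C * ∫ ω, f (X (n + 1) ω) ^ 2 ∂μ) * Real.exp (∫ y, f y ∂κ n (X n ω)) := by
    rw [← Real.exp_add]
    refine le_trans ?_ (Real.add_one_le_exp _)
    linarith [h2.1]
  calc _ ≤ Real.exp (T ω) * (Real.exp (C * ∫ ω, f (X (n + 1) ω) ^ 2 ∂μ) *
        Real.exp (∫ y, f y ∂κ n (X n ω))) := by gcongr
    _ = _ := by ring

lemma UEChain.bddMeas_corrector (hch : UEChain μ X κ C) {h : ℕ → E → ℝ}
    (hh : ∀ j, BddMeas mE (h j)) (m j : ℕ) : BddMeas mE (corrector κ h m j) := by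
  have := hch.2.2.1
  induction m generalizing j with
  | zero => exact BddMeas.const 0
  | succ m ih => exact (hh j).add ((ih (j + 1)).transition (κ j))

lemma UEChain.integral_corrector (hch : UEChain μ X κ C) {h : ℕ → E → ℝ}
    (hh : ∀ j, BddMeas mE (h j)) (h0 : ∀ j, ∫ ω, h j (X j ω) ∂μ = 0) (m j : ℕ) :
    ∫ ω, corrector κ h m j (X j ω) ∂μ = 0 := by
  obtain ⟨_, hX, hκ, -, -⟩ := id hch
  induction m generalizing j with
  | zero => simp [corrector]
  | succ m ih =>
    have hu := hch.bddMeas_corrector hh m (j + 1)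
    simp only [corrector]
    rw [integral_add (((hh j).comp (hX j)).integrable μ)
      (((hu.transition (κ j)).comp (hX j)).integrable μ), h0, hch.integral_transition j hu, ih,
      add_zero]

lemma UEChain.abs_corrector_le (hch : UEChain μ X κ C) (hC : 1 < C) {h : ℕ → E → ℝ}
    (hh : ∀ j, BddMeas mE (h j)) (h0 : ∀ j, ∫ ω, h j (X j ω) ∂μ = 0) {b : ℝ} (hb0 : 0 ≤ b)
    (hb : ∀ j x, |h j x| ≤ b) (m j : ℕ) : ∀ᵐ ω ∂μ, |corrector κ h m j (X j ω)| ≤ b * C := by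
  induction m generalizing j with
  | zero =>
    refine ae_of_all _ fun ω => ?_
    simp only [corrector, abs_zero]
    positivity
  | succ m ih =>
    filter_upwards [hch.abs_transition_le hC j (hch.bddMeas_corrector hh m (j + 1))
      (hch.integral_corrector hh h0 m (j + 1)) (ih (j + 1))] with ω hω
    calc _ ≤ |h j (X j ω)| + |∫ y, corrector κ h m (j + 1) y ∂κ j (X j ω)| := abs_add_le _ _
      _ ≤ b + (1 - C⁻¹) * (b * C) := add_le_add (hb _ _) hω
      _ = b * C := by field_simp; ring

/-- The second moment of the corrector at time `j`. -/
def correctorSq (μ : Measure Ω) (X : ℕ → Ω → E) (κ : ℕ → Kernel E E) (h : ℕ → E → ℝ)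
    (n j : ℕ) : ℝ :=
  ∫ ω, corrector κ h (n + 1 - j) j (X j ω) ^ 2 ∂μ

lemma correctorSq_nonneg (h : ℕ → E → ℝ) (n j : ℕ) : 0 ≤ correctorSq μ X κ h n j :=
  integral_nonneg fun _ => sq_nonneg _

lemma correctorSq_last (h : ℕ → E → ℝ) (n : ℕ) : correctorSq μ X κ h n (n + 1) = 0 := by
  simp [correctorSq, corrector]

lemma UEChain.integral_partialMart_sq (hch : UEChain μ X κ C) (hC : 1 < C) {h : ℕ → E → ℝ}
    (hh : ∀ j, BddMeas mE (h j)) (h0 : ∀ j, ∫ ω, h j (X j ω) ∂μ = 0) {k n j : ℕ} (hk : k ≤ j)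
    (hj : j ≤ n + 1) :
    C⁻¹ * ∑ i ∈ Finset.Ico k (j + 1), correctorSq μ X κ h n i ≤
        ∫ ω, partialMart X κ h k n j ω ^ 2 ∂μ ∧
      ∫ ω, partialMart X κ h k n j ω ^ 2 ∂μ ≤
        ∑ i ∈ Finset.Ico k (j + 1), correctorSq μ X κ h n i := by
  induction j, hk using Nat.le_induction with
  | base =>
    have : ∫ ω, partialMart X κ h k n k ω ^ 2 ∂μ = correctorSq μ X κ h n k := by
      simp [partialMart, correctorSq]
    rw [this]
    simp only [Nat.Ico_succ_singleton, Finset.sum_singleton, le_refl, and_true]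
    exact mul_le_of_le_one_left (correctorSq_nonneg _ _ _) (inv_le_one_of_one_le₀ hC.le)
  | succ j hk ih =>
    have ih := ih (by omega)
    have hu := hch.bddMeas_corrector hh (n + 1 - (j + 1)) (j + 1)
    have e := hch.integral_sq_add j hu (bddMeas_partialSum X hh k j)
    simp_rw [← partialMart_eq (X := X) (κ := κ) h hk (show j ≤ n by omega)] at e
    have e' : ∫ ω, partialMart X κ h k n (j + 1) ω ^ 2 ∂μ = _ := e
    rw [e', Finset.sum_Ico_succ_top (show k ≤ j + 1 by omega)]
    have hcon := hch.integral_sq_transition_le hC j hu (hch.integral_corrector hh h0 _ _)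
    have hlow := inv_le_of_sq_bound hC (correctorSq_nonneg (μ := μ) (X := X) (κ := κ) h n (j + 1))
      hcon
    have hb : 0 ≤ ∫ ω, (∫ y, corrector κ h (n + 1 - (j + 1)) (j + 1) y ∂κ j (X j ω)) ^ 2 ∂μ :=
      integral_nonneg fun _ => sq_nonneg _
    rw [correctorSq] at hlow ⊢
    rw [mul_add]
    exact ⟨by linarith [ih.1], by linarith [ih.2]⟩

lemma UEChain.integral_exp_partialMart_le (hch : UEChain μ X κ C) (hC : 1 < C) {h : ℕ → E → ℝ}
    (hh : ∀ j, BddMeas mE (h j)) (h0 : ∀ j, ∫ ω, h j (X j ω) ∂μ = 0) {b : ℝ} (hb0 : 0 ≤ b)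
    (hb : ∀ j x, |h j x| ≤ b) {l : ℝ} (hl : |l| * (b * C) ≤ 1) {k n j : ℕ} (hk : k ≤ j)
    (hj : j ≤ n + 1) :
    ∫ ω, Real.exp (l * partialMart X κ h k n j ω) ∂μ ≤
      Real.exp (l ^ 2 * C * ∑ i ∈ Finset.Ico k (j + 1), correctorSq μ X κ h n i) := by
  obtain ⟨_, hX, hκ, -, -⟩ := id hch
  have hbd : ∀ m i, ∀ᵐ ω ∂μ, |l * corrector κ h m i (X i ω)| ≤ 1 := by
    intro m i
    filter_upwards [hch.abs_corrector_le hC hh h0 hb0 hb m i] with ω hω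
    rw [abs_mul]
    exact (mul_le_mul_of_nonneg_left hω (abs_nonneg _)).trans hl
  induction j, hk using Nat.le_induction with
  | base =>
    have hu := hch.bddMeas_corrector hh (n + 1 - k) k
    have huX := (hu.comp (hX k)).const_mul l
    simp only [partialMart, Finset.Ico_self, Finset.sum_empty, zero_add, Nat.Ico_succ_singleton,
      Finset.sum_singleton]
    have h4 := integral_mono_ae (huX.exp.integrable μ)
      ((((BddMeas.const 1).add huX).add huX.sq).integrable _)
      ((hbd (n + 1 - k) k).mono fun y hy => exp_le_one_add_add_sq hy)
    rw [integral_add (((BddMeas.const 1).add huX).integrable _) (huX.sq.integrable _),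
      integral_add (integrable_const _) (huX.integrable _), integral_const, probReal_univ,
      one_smul, integral_const_mul, hch.integral_corrector hh h0] at h4
    simp_rw [mul_pow] at h4
    rw [integral_const_mul] at h4
    refine h4.trans (le_trans ?_ (Real.add_one_le_exp _))
    have : 0 ≤ l ^ 2 * correctorSq μ X κ h n k := mul_nonneg (sq_nonneg _) (correctorSq_nonneg _ _ _)
    rw [correctorSq] at this ⊢
    nlinarith
  | succ j hk ih =>
    have ih := ih (by omega)
    have hu := hch.bddMeas_corrector hh (n + 1 - (j + 1)) (j + 1)
    have e := hch.integral_exp_add_le (by linarith) j (hu.const_mul l) (hbd _ _)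
      ((bddMeas_partialSum X hh k j).const_mul l)
    simp_rw [integral_const_mul, ← mul_add,
      ← partialMart_eq (X := X) (κ := κ) h hk (show j ≤ n by omega), mul_pow,
      integral_const_mul] at e
    rw [Finset.sum_Ico_succ_top (show k ≤ j + 1 by omega)]
    calc _ ≤ _ := e
      _ ≤ Real.exp (C * (l ^ 2 * correctorSq μ X κ h n (j + 1))) *
          Real.exp (l ^ 2 * C * ∑ i ∈ Finset.Ico k (j + 1), correctorSq μ X κ h n i) := by
        rw [correctorSq]; gcongr
      _ = _ := by rw [← Real.exp_add]; congr 1; ring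

/-- Comparison of the correctors with the summands. -/
lemma UEChain.sum_correctorSq_bounds (hch : UEChain μ X κ C) (hC : 1 < C) {h : ℕ → E → ℝ}
    (hh : ∀ j, BddMeas mE (h j)) (h0 : ∀ j, ∫ ω, h j (X j ω) ∂μ = 0) {k n : ℕ} (hkn : k ≤ n) :
    ∑ j ∈ Finset.Ico k (n + 1), ∫ ω, h j (X j ω) ^ 2 ∂μ ≤
        4 * ∑ j ∈ Finset.Ico k (n + 1), correctorSq μ X κ h n j ∧
      ∑ j ∈ Finset.Ico k (n + 1), correctorSq μ X κ h n j ≤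
        C ^ 2 * ∑ j ∈ Finset.Ico k (n + 1), ∫ ω, h j (X j ω) ^ 2 ∂μ := by
  obtain ⟨_, hX, hκ, -, -⟩ := id hch
  have hC0 : 0 < C := by linarith
  have hc1 := inv_lt_one_of_one_lt₀ hC
  have hc0 : 0 < C⁻¹ := by positivity
  have hθ : 0 < 1 - C⁻¹ := by linarith
  have hshift := sum_shift_le (correctorSq_nonneg (μ := μ) (X := X) (κ := κ) h n) hkn
    (correctorSq_last h n)
  have hstep : ∀ j ∈ Finset.Ico k (n + 1),
      ∫ ω, h j (X j ω) ^ 2 ∂μ ≤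
        2 * correctorSq μ X κ h n j + 2 * correctorSq μ X κ h n (j + 1) ∧
      correctorSq μ X κ h n j ≤
        C * ∫ ω, h j (X j ω) ^ 2 ∂μ + (1 - C⁻¹) * correctorSq μ X κ h n (j + 1) := by
    intro j hj
    have hjn : j ≤ n := by have := (Finset.mem_Ico.1 hj).2; omega
    have hu := hch.bddMeas_corrector hh (n + 1 - (j + 1)) (j + 1)
    have hP := (hu.transition (κ j)).comp (hX j)
    have hw := (hch.bddMeas_corrector hh (n + 1 - j) j).comp (hX j)
    have hhX := (hh j).comp (hX j)
    have hcon := hch.integral_sq_transition_le hC j hu (hch.integral_corrector hh h0 _ _)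
    change _ ≤ _ * correctorSq μ X κ h n (j + 1) at hcon
    have ha := correctorSq_nonneg (μ := μ) (X := X) (κ := κ) h n (j + 1)
    constructor
    · have h1 := integral_mono (μ := μ) (hhX.sq.integrable μ)
        (((hw.sq.const_mul 2).add (hP.sq.const_mul 2)).integrable μ) (fun ω => by
          beta_reduce
          rw [corrector_eq κ h hjn (X j ω)]
          generalize h j (X j ω) = x
          generalize ∫ y, corrector κ h (n + 1 - (j + 1)) (j + 1) y ∂κ j (X j ω) = y
          nlinarith [sq_nonneg (x + 2 * y)])
      rw [integral_add ((hw.sq.const_mul 2).integrable μ) ((hP.sq.const_mul 2).integrable μ),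
        integral_const_mul, integral_const_mul] at h1
      change _ ≤ 2 * correctorSq μ X κ h n j + _ at h1
      have : (1 - C⁻¹) ^ 2 * correctorSq μ X κ h n (j + 1) ≤ correctorSq μ X κ h n (j + 1) :=
        mul_le_of_le_one_left ha (by nlinarith)
      linarith
    · have h1 := integral_mono (μ := μ) (hw.sq.integrable μ)
        (((hhX.sq.const_mul C).add (hP.sq.const_mul (1 - C⁻¹)⁻¹)).integrable μ) (fun ω => by
          beta_reduce
          rw [corrector_eq κ h hjn (X j ω)]
          generalize h j (X j ω) = x
          generalize ∫ y, corrector κ h (n + 1 - (j + 1)) (j + 1) y ∂κ j (X j ω) = y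
          have hne : C - 1 ≠ 0 := by linarith
          have : C * x ^ 2 + (1 - C⁻¹)⁻¹ * y ^ 2 - (x + y) ^ 2 =
              ((C - 1) * x - y) ^ 2 / (C - 1) := by
            field_simp
            ring
          have h2 : 0 ≤ ((C - 1) * x - y) ^ 2 / (C - 1) := div_nonneg (sq_nonneg _) (by linarith)
          linarith)
      rw [integral_add ((hhX.sq.const_mul C).integrable μ)
        ((hP.sq.const_mul (1 - C⁻¹)⁻¹).integrable μ), integral_const_mul, integral_const_mul] at h1
      change correctorSq μ X κ h n j ≤ _ at h1
      have := mul_le_mul_of_nonneg_left hcon (inv_pos.2 hθ).le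
      have e : (1 - C⁻¹)⁻¹ * ((1 - C⁻¹) ^ 2 * correctorSq μ X κ h n (j + 1)) =
          (1 - C⁻¹) * correctorSq μ X κ h n (j + 1) := by
        field_simp
      linarith
  constructor
  · have := Finset.sum_le_sum fun j hj => (hstep j hj).1
    rw [Finset.sum_add_distrib, ← Finset.mul_sum, ← Finset.mul_sum] at this
    linarith
  · have := Finset.sum_le_sum fun j hj => (hstep j hj).2
    rw [Finset.sum_add_distrib, ← Finset.mul_sum, ← Finset.mul_sum] at this
    have h2 := mul_le_mul_of_nonneg_left hshift hθ.le
    have h3 : C⁻¹ * ∑ j ∈ Finset.Ico k (n + 1), correctorSq μ X κ h n j ≤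
        C * ∑ j ∈ Finset.Ico k (n + 1), ∫ ω, h j (X j ω) ^ 2 ∂μ := by linarith
    rw [inv_mul_le_iff₀ hC0] at h3
    linarith

lemma UEChain.sum_correctorSq_le (hch : UEChain μ X κ C) (hC : 1 < C) {h : ℕ → E → ℝ}
    (hh : ∀ j, BddMeas mE (h j)) (h0 : ∀ j, ∫ ω, h j (X j ω) ∂μ = 0) {k n : ℕ} (hkn : k ≤ n) :
    C⁻¹ * ∑ j ∈ Finset.Ico k (n + 1), correctorSq μ X κ h n j ≤
        ∫ ω, (∑ j ∈ Finset.Icc k n, h j (X j ω)) ^ 2 ∂μ ∧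
      ∫ ω, (∑ j ∈ Finset.Icc k n, h j (X j ω)) ^ 2 ∂μ ≤
        ∑ j ∈ Finset.Ico k (n + 1), correctorSq μ X κ h n j := by
  have := hch.integral_partialMart_sq hC hh h0 (show k ≤ n + 1 by omega) le_rfl
  simpa only [partialMart_last, Finset.sum_Ico_succ_top (show k ≤ n + 1 by omega),
    correctorSq_last, add_zero] using this

lemma UEChain.integral_exp_sum_le (hch : UEChain μ X κ C) (hC : 1 < C) {h : ℕ → E → ℝ}
    (hh : ∀ j, BddMeas mE (h j)) (h0 : ∀ j, ∫ ω, h j (X j ω) ∂μ = 0) {b : ℝ} (hb0 : 0 ≤ b)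
    (hb : ∀ j x, |h j x| ≤ b) {l : ℝ} (hl : |l| * (b * C) ≤ 1) {k n : ℕ} (hkn : k ≤ n) :
    ∫ ω, Real.exp (l * ∑ j ∈ Finset.Icc k n, h j (X j ω)) ∂μ ≤
      Real.exp (l ^ 2 * C ^ 2 * ∫ ω, (∑ j ∈ Finset.Icc k n, h j (X j ω)) ^ 2 ∂μ) := by
  have h1 := hch.integral_exp_partialMart_le hC hh h0 hb0 hb hl (show k ≤ n + 1 by omega) le_rfl
  simp only [partialMart_last, Finset.sum_Ico_succ_top (show k ≤ n + 1 by omega),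
    correctorSq_last, add_zero] at h1
  have h2 := (hch.sum_correctorSq_le hC hh h0 hkn).1
  have hC0 : 0 < C := by linarith
  rw [inv_mul_le_iff₀ hC0] at h2
  refine h1.trans (Real.exp_le_exp.2 ?_)
  calc _ ≤ l ^ 2 * C * (C * ∫ ω, (∑ j ∈ Finset.Icc k n, h j (X j ω)) ^ 2 ∂μ) := by gcongr
    _ = _ := by ring

end Chain

lemma abs_rpow_le_exp {p : ℝ} (hp : 0 < p) (x : ℝ) :
    |x| ^ p ≤ (1 + (Nat.factorial ⌈p⌉₊ : ℝ)) * (Real.exp x + Real.exp (-x)) := by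
  have h1 : |x| ^ p ≤ 1 + |x| ^ ⌈p⌉₊ := by
    rcases le_total |x| 1 with h | h
    · have := Real.rpow_le_one (abs_nonneg x) h hp.le
      have : 0 ≤ |x| ^ ⌈p⌉₊ := by positivity
      linarith
    · have := Real.rpow_le_rpow_of_exponent_le h (Nat.le_ceil p)
      rw [Real.rpow_natCast] at this
      linarith
  have h2 := Real.pow_div_factorial_le_exp |x| (abs_nonneg x) ⌈p⌉₊
  rw [div_le_iff₀ (by positivity)] at h2
  have h3 := Real.one_le_exp (abs_nonneg x)
  have h4 : Real.exp |x| ≤ Real.exp x + Real.exp (-x) := by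
    rcases abs_cases x with h | h <;> rw [h.1] <;> linarith [Real.exp_pos x, Real.exp_pos (-x)]
  calc |x| ^ p ≤ (1 + (Nat.factorial ⌈p⌉₊ : ℝ)) * Real.exp |x| := by linarith
    _ ≤ _ := by gcongr

lemma BddMeas.integral_abs_rpow_le {Ω : Type*} {m : MeasurableSpace Ω} {W : Ω → ℝ}
    (hW : BddMeas m W) (μ : Measure Ω) [IsFiniteMeasure μ] {p l K : ℝ} (hp : 0 < p) (hl : 0 < l)
    (h1 : ∫ ω, Real.exp (l * W ω) ∂μ ≤ K) (h2 : ∫ ω, Real.exp (-l * W ω) ∂μ ≤ K) :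
    (∫ ω, |W ω| ^ p ∂μ) ^ (1 / p) ≤
      l⁻¹ * ((1 + (Nat.factorial ⌈p⌉₊ : ℝ)) * (2 * K)) ^ (1 / p) := by
  have hK : 0 ≤ K := le_trans (integral_nonneg fun _ => (Real.exp_pos _).le) h1
  set c : ℝ := 1 + (Nat.factorial ⌈p⌉₊ : ℝ) with hc
  have hc0 : 0 ≤ c := by positivity
  have hi1 := (hW.const_mul l).exp.integrable μ
  have hi2 := (hW.const_mul (-l)).exp.integrable μ
  have hle : ∫ ω, |W ω| ^ p ∂μ ≤ l⁻¹ ^ p * (c * (2 * K)) := by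
    calc ∫ ω, |W ω| ^ p ∂μ ≤
        ∫ ω, l⁻¹ ^ p * (c * (Real.exp (l * W ω) + Real.exp (-l * W ω))) ∂μ := by
          refine integral_mono_of_nonneg (ae_of_all _ fun ω => by positivity)
            (((hi1.add hi2).const_mul c).const_mul _) (ae_of_all _ fun ω => ?_)
          have := abs_rpow_le_exp hp (l * W ω)
          rw [abs_mul, abs_of_pos hl, Real.mul_rpow hl.le (abs_nonneg _)] at this
          beta_reduce
          rw [Real.inv_rpow hl.le, le_inv_mul_iff₀ (Real.rpow_pos_of_pos hl p), neg_mul]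
          exact this
      _ = l⁻¹ ^ p * (c * (∫ ω, Real.exp (l * W ω) ∂μ + ∫ ω, Real.exp (-l * W ω) ∂μ)) := by
          rw [integral_const_mul, integral_const_mul, integral_add hi1 hi2]
      _ ≤ _ := by
          rw [two_mul]
          gcongr
  have hl' : 0 ≤ l⁻¹ := (inv_pos.2 hl).le
  calc _ ≤ (l⁻¹ ^ p * (c * (2 * K))) ^ (1 / p) :=
        Real.rpow_le_rpow (integral_nonneg fun _ => by positivity) hle (by positivity)
    _ = _ := by
      rw [Real.mul_rpow (by positivity) (by positivity), ← Real.rpow_mul hl',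
        mul_one_div_cancel hp.ne', Real.rpow_one]

section Centering

variable {Ω E : Type*} [MeasurableSpace Ω] [mE : MeasurableSpace E]
  {μ : Measure Ω} {X : ℕ → Ω → E} {κ : ℕ → Kernel E E} {C : ℝ}

/-- The centered functions `g_j - E[g_j(X_j)]`. -/
def centered (μ : Measure Ω) (X : ℕ → Ω → E) (g : ℕ → E → ℝ) (j : ℕ) (x : E) : ℝ :=
  g j x - ∫ ω, g j (X j ω) ∂μ

variable {g : ℕ → E → ℝ}

lemma bddMeas_centered (hg : ∀ j, BddMeas mE (g j)) (j : ℕ) : BddMeas mE (centered μ X g j) :=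
  (hg j).sub (.const _)

lemma UEChain.integral_centered (hch : UEChain μ X κ C) (hg : ∀ j, BddMeas mE (g j)) (j : ℕ) :
    ∫ ω, centered μ X g j (X j ω) ∂μ = 0 := by
  have := hch.1
  simp only [centered]
  rw [integral_sub (((hg j).comp (hch.2.1 j)).integrable μ) (integrable_const _)]
  simp

lemma UEChain.abs_centered_le (hch : UEChain μ X κ C) {B : ℝ} (hB : ∀ j x, |g j x| ≤ B) (j : ℕ)
    (x : E) : |centered μ X g j x| ≤ 2 * B := by
  have := hch.1
  have h1 : |∫ ω, g j (X j ω) ∂μ| ≤ B := by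
    simpa using norm_integral_le_of_norm_le_const (μ := μ) (f := fun ω => g j (X j ω))
      (ae_of_all _ fun ω => hB j (X j ω))
  have h2 := abs_sub (g j x) (∫ ω, g j (X j ω) ∂μ)
  have h3 := hB j x
  rw [centered]
  linarith

lemma UEChain.sum_sub_integral (hch : UEChain μ X κ C) (hg : ∀ j, BddMeas mE (g j))
    (s : Finset ℕ) (ω : Ω) :
    (∑ j ∈ s, g j (X j ω)) - ∫ ω', (∑ j ∈ s, g j (X j ω')) ∂μ =
      ∑ j ∈ s, centered μ X g j (X j ω) := by
  have := hch.1
  rw [integral_finsetSum _ fun j _ => ((hg j).comp (hch.2.1 j)).integrable μ,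
    ← Finset.sum_sub_distrib]
  rfl

lemma UEChain.variance_sum (hch : UEChain μ X κ C) (hg : ∀ j, BddMeas mE (g j)) (s : Finset ℕ) :
    variance (fun ω => ∑ j ∈ s, g j (X j ω)) μ =
      ∫ ω, (∑ j ∈ s, centered μ X g j (X j ω)) ^ 2 ∂μ := by
  rw [variance_eq_integral
    (BddMeas.sum s fun j _ => (hg j).comp (hch.2.1 j)).1.aemeasurable]
  simp_rw [hch.sum_sub_integral hg]

lemma UEChain.variance_bounds (hch : UEChain μ X κ C) (hC : 1 < C) (hg : ∀ j, BddMeas mE (g j))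
    {k n : ℕ} (hkn : k ≤ n) :
    (4 * C)⁻¹ * ∑ j ∈ Finset.Icc k n, variance (fun ω => g j (X j ω)) μ ≤
        variance (fun ω => ∑ j ∈ Finset.Icc k n, g j (X j ω)) μ ∧
      variance (fun ω => ∑ j ∈ Finset.Icc k n, g j (X j ω)) μ ≤
        C ^ 2 * ∑ j ∈ Finset.Icc k n, variance (fun ω => g j (X j ω)) μ := by
  have hvar : ∀ j, variance (fun ω => g j (X j ω)) μ =
      ∫ ω, centered μ X g j (X j ω) ^ 2 ∂μ := fun j => by simpa using hch.variance_sum hg {j}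
  have hh := bddMeas_centered (μ := μ) (X := X) hg
  have h0 := hch.integral_centered hg
  have h1 := hch.sum_correctorSq_le hC hh h0 hkn
  have h2 := hch.sum_correctorSq_bounds hC hh h0 hkn
  simp_rw [hvar, hch.variance_sum hg]
  rw [Finset.Ico_add_one_right_eq_Icc] at h1 h2
  have hC0 : 0 < C := by linarith
  refine ⟨?_, h1.2.trans h2.2⟩
  rw [inv_mul_le_iff₀ hC0] at h1
  rw [inv_mul_le_iff₀ (by positivity)]
  linarith [h1.1, h2.1]

lemma UEChain.moment_bound (hch : UEChain μ X κ C) (hC : 1 < C) (hg : ∀ j, BddMeas mE (g j))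
    {B : ℝ} (hB0 : 0 ≤ B) (hB : ∀ j x, |g j x| ≤ B) {p : ℝ} (hp : 0 < p) {k n : ℕ}
    (hkn : k ≤ n) :
    (∫ ω, |(∑ j ∈ Finset.Icc k n, g j (X j ω)) -
        ∫ ω', (∑ j ∈ Finset.Icc k n, g j (X j ω')) ∂μ| ^ p ∂μ) ^ (1 / p) ≤
      (2 * B * C + 1) * ((1 + (Nat.factorial ⌈p⌉₊ : ℝ)) * (2 * Real.exp (C ^ 2))) ^ (1 / p) *
        (1 + Real.sqrt (variance (fun ω => ∑ j ∈ Finset.Icc k n, g j (X j ω)) μ)) := by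
  have := hch.1
  have hh := bddMeas_centered (μ := μ) (X := X) hg
  have h0 := hch.integral_centered hg
  set V := variance (fun ω => ∑ j ∈ Finset.Icc k n, g j (X j ω)) μ with hV
  have hV0 : 0 ≤ V := variance_nonneg _ _
  have hVeq := hch.variance_sum hg (Finset.Icc k n)
  rw [← hV] at hVeq
  have hC0 : 0 < C := by linarith
  have hBC : 0 ≤ 2 * B * C := by positivity
  have hs := Real.sqrt_nonneg V
  set l : ℝ := ((2 * B * C + 1) * (1 + Real.sqrt V))⁻¹ with hl
  have hl0 : 0 < l := by positivity
  have hl1 : l * (2 * B * C) ≤ 1 := by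
    rw [hl, inv_mul_le_iff₀ (by positivity)]
    nlinarith
  have hl2 : l ^ 2 * V ≤ 1 := by
    have h1 : l * Real.sqrt V ≤ 1 := by
      rw [hl, inv_mul_le_iff₀ (by positivity)]
      nlinarith
    have h2 : (l * Real.sqrt V) ^ 2 ≤ 1 := pow_le_one₀ (by positivity) h1
    rwa [mul_pow, Real.sq_sqrt hV0] at h2
  have hexp : ∀ t : ℝ, |t| = l →
      ∫ ω, Real.exp (t * ∑ j ∈ Finset.Icc k n, centered μ X g j (X j ω)) ∂μ ≤
        Real.exp (C ^ 2) := by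
    intro t ht
    have h1 := hch.integral_exp_sum_le hC hh h0 (by positivity) (hch.abs_centered_le hB)
      (l := t) (by rw [ht]; exact hl1) hkn
    refine h1.trans (Real.exp_le_exp.2 ?_)
    rw [← hVeq, ← sq_abs t, ht]
    nlinarith [sq_nonneg C]
  have hW : BddMeas _ (fun ω => ∑ j ∈ Finset.Icc k n, centered μ X g j (X j ω)) :=
    BddMeas.sum _ fun j _ => (hh j).comp (hch.2.1 j)
  simp_rw [hch.sum_sub_integral hg]
  refine (hW.integral_abs_rpow_le μ hp hl0 (hexp l (abs_of_pos hl0))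
    (hexp (-l) (by rw [abs_neg, abs_of_pos hl0]))).trans (le_of_eq ?_)
  rw [hl, inv_inv]
  ring

end Centering

/-- Lemma 3.4. For additive functionals `G_{k,n} = ∑_{j=k}^n g_j(X_j)`
of a uniformly elliptic Markov chain:
(i) `C₁ ∑_j Var(G_j) ≤ Var(G_{k,n}) ≤ C₂ ∑_j Var(G_j)`, with `C₁, C₂` depending only on
the ellipticity constant `C`; and
(ii) for every `p > 2`, `‖G_{k,n} - 𝔼 G_{k,n}‖_{L^p} ≤ R_p (1 + √Var(G_{k,n}))`, with
`R_p` depending only on `p`, `C` and `sup_j ‖G_j‖_∞`. -/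
theorem variance_and_moment_estimates (C : ℝ) (hC : 1 < C) :
    (∃ C₁ C₂ : ℝ, 0 < C₁ ∧ 0 < C₂ ∧
      ∀ (Ω E : Type) [MeasurableSpace Ω] [MeasurableSpace E]
        (μ : Measure Ω) (X : ℕ → Ω → E) (κ : ℕ → Kernel E E) (g : ℕ → E → ℝ),
        UEChain μ X κ C →
        (∀ n, Measurable (g n)) →
        (∃ B : ℝ, ∀ n x, |g n x| ≤ B) →
        ∀ k n : ℕ, k ≤ n →
          C₁ * ∑ j ∈ Finset.Icc k n, variance (fun ω => g j (X j ω)) μ ≤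
              variance (fun ω => ∑ j ∈ Finset.Icc k n, g j (X j ω)) μ ∧
            variance (fun ω => ∑ j ∈ Finset.Icc k n, g j (X j ω)) μ ≤
              C₂ * ∑ j ∈ Finset.Icc k n, variance (fun ω => g j (X j ω)) μ) ∧
    (∀ p : ℝ, 2 < p → ∀ B : ℝ, 0 ≤ B →
      ∃ Rp : ℝ, 0 < Rp ∧
        ∀ (Ω E : Type) [MeasurableSpace Ω] [MeasurableSpace E]
          (μ : Measure Ω) (X : ℕ → Ω → E) (κ : ℕ → Kernel E E) (g : ℕ → E → ℝ),
          UEChain μ X κ C →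
          (∀ n, Measurable (g n)) →
          (∀ n x, |g n x| ≤ B) →
          ∀ k n : ℕ, k ≤ n →
            (∫ ω, |(∑ j ∈ Finset.Icc k n, g j (X j ω)) -
                ∫ ω', (∑ j ∈ Finset.Icc k n, g j (X j ω')) ∂μ| ^ p ∂μ) ^ (1 / p)
              ≤ Rp * (1 + Real.sqrt (variance (fun ω => ∑ j ∈ Finset.Icc k n, g j (X j ω)) μ))) := by
  have hC0 : 0 < C := by linarith
  refine ⟨⟨(4 * C)⁻¹, C ^ 2, by positivity, by positivity, ?_⟩, fun p hp B hB0 =>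
    ⟨(2 * B * C + 1) * ((1 + (Nat.factorial ⌈p⌉₊ : ℝ)) * (2 * Real.exp (C ^ 2))) ^ (1 / p),
      by positivity, ?_⟩⟩
  · intro Ω E _ _ μ X κ g hch hg ⟨B, hB⟩ k n hkn
    exact hch.variance_bounds hC (fun j => ⟨hg j, B, hB j⟩) hkn
  · intro Ω E _ _ μ X κ g hch hg hB k n hkn
    exact hch.moment_bound hC (fun j => ⟨hg j, B, hB j⟩) hB0 hB (by linarith) hkn

end EdgeworthMC
end
end

section
/- Write 𝓑 = {n₁ < n₂ < ... < n_d} ⊂ {1,...,N}, set n₀ = 0 and n_{d+1} = ∞, and let 𝓔 be the σ-algebra generated by {X_n : n ∈ 𝓑}. Then for almost every realization of 𝓔: (i) the families of random variables {X_n : n_s < n < n_{s+1}}, s = 0,...,d, are conditionally independent given 𝓔; and (ii) if n and n+1 belong to the same block (n_s, n_{s+1}), then P(X_{n+1} ∈ A | X_n = x, 𝓔) = ∫_A p_{n,𝓔}(x,y) dμ_{n+1,𝓔}(y), where μ_{n+1,𝓔} is the conditional law of X_{n+1} given 𝓔 and the conditional transition densities satisfy C^{-6} ≤ p_{n,𝓔}(x,y)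 ≤ C^6. In particular, conditioned on 𝓔, each block {X_n : n_s < n < n_{s+1}} forms a uniformly elliptic Markov chain with ellipticity constant C^6. -/
open MeasureTheory ProbabilityTheory Filter Finset
open scoped ENNReal Topology

noncomputable section

namespace EdgeworthMC

variable {Ω E : Type*} [MeasurableSpace Ω] [MeasurableSpace E]

/-- The left endpoint `n_s` of the block `(n_s, n_{s+1})` (with `n_0 = 0`). -/
def blockLower {d : ℕ} (nn : Fin d → ℕ) (s : Fin (d + 1)) : ℕ :=
  if h : 0 < (s : ℕ) then nn ⟨(s : ℕ) - 1, by have := s.isLt; omega⟩ else 0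

/-- The right endpoint `n_{s+1}` of the block `(n_s, n_{s+1})` (with `n_{d+1} = ∞`). -/
def blockUpper {d : ℕ} (nn : Fin d → ℕ) (s : Fin (d + 1)) : WithTop ℕ :=
  if h : (s : ℕ) < d then ((nn ⟨(s : ℕ), h⟩ : ℕ) : WithTop ℕ) else ⊤

/-- The block `(n_s, n_{s+1}) = {m : n_s < m < n_{s+1}}` of indices strictly between two
consecutive elements of `𝓑 = {n_1 < ⋯ < n_d}`. -/
def blockSet {d : ℕ} (nn : Fin d → ℕ) (s : Fin (d + 1)) : Set ℕ :=
  {m : ℕ | blockLower nn s < m ∧ ((m : ℕ) : WithTop ℕ) < blockUpper nn s}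

/-- The σ-algebra generated by the variables of the block `(n_s, n_{s+1})`. -/
def blockSigma (X : ℕ → Ω → E) {d : ℕ} (nn : Fin d → ℕ) (s : Fin (d + 1)) :
    MeasurableSpace Ω :=
  ⨆ n ∈ blockSet nn s, MeasurableSpace.comap (X n) (inferInstance : MeasurableSpace E)

end EdgeworthMC

namespace EdgeworthMC

section CondExp

variable {Ω : Type*} {m m₁ m₂ m₃ mΩ : MeasurableSpace Ω} {μ : Measure Ω}

/-- Intersections of an `m₁`-measurable and an `m₂`-measurable set. -/
def rectangles (m₁ m₂ : MeasurableSpace Ω) : Set (Set Ω) :=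
  Set.image2 (· ∩ ·) {s | MeasurableSet[m₁] s} {t | MeasurableSet[m₂] t}

lemma isPiSystem_rectangles : IsPiSystem (rectangles m₁ m₂) := by
  rintro _ ⟨s, hs, t, ht, rfl⟩ _ ⟨s', hs', t', ht', rfl⟩ -
  exact ⟨s ∩ s', hs.inter hs', t ∩ t', ht.inter ht', Set.inter_inter_inter_comm _ _ _ _⟩

lemma generateFrom_rectangles :
    MeasurableSpace.generateFrom (rectangles m₁ m₂) = m₁ ⊔ m₂ := by
  apply le_antisymm
  · refine MeasurableSpace.generateFrom_le ?_
    rintro _ ⟨s, hs, t, ht, rfl⟩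
    exact MeasurableSet.inter ((le_sup_left : m₁ ≤ m₁ ⊔ m₂) s hs)
      ((le_sup_right : m₂ ≤ m₁ ⊔ m₂) t ht)
  · refine sup_le (fun s hs => ?_) (fun t ht => ?_)
    · exact MeasurableSpace.measurableSet_generateFrom
        ⟨s, hs, Set.univ, MeasurableSet.univ, Set.inter_univ s⟩
    · exact MeasurableSpace.measurableSet_generateFrom
        ⟨Set.univ, MeasurableSet.univ, t, ht, Set.univ_inter t⟩

lemma setIntegral_eq_zero_of_rectangles (h₁ : m₁ ≤ mΩ) (h₂ : m₂ ≤ mΩ) {f : Ω → ℝ}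
    (hf : Integrable f μ)
    (h : ∀ s t, MeasurableSet[m₁] s → MeasurableSet[m₂] t → ∫ ω in s ∩ t, f ω ∂μ = 0)
    {K : Set Ω} (hK : MeasurableSet[m₁ ⊔ m₂] K) : ∫ ω in K, f ω ∂μ = 0 := by
  have hle : m₁ ⊔ m₂ ≤ mΩ := sup_le h₁ h₂
  have huniv : ∫ ω, f ω ∂μ = 0 := by
    simpa using h Set.univ Set.univ MeasurableSet.univ MeasurableSet.univ
  induction K, hK using MeasurableSpace.induction_on_inter
    generateFrom_rectangles.symm isPiSystem_rectangles with
  | empty => simp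
  | basic K hK =>
    obtain ⟨s, hs, t, ht, rfl⟩ := hK
    exact h s t hs ht
  | compl K hK ih =>
    rw [setIntegral_compl (hle K hK) hf, ih, huniv, sub_zero]
  | iUnion K hd hK ih =>
    rw [integral_iUnion (fun i => hle _ (hK i)) hd hf.integrableOn]
    simp [ih]

/-- The sets assembled from countably many `m₂`-measurable sets along a countable `m₁`-measurable
partition. -/
def mosaics (m₁ m₂ : MeasurableSpace Ω) : Set (Set Ω) :=
  {K | ∃ (h : Ω → ℕ) (D : ℕ → Set Ω), Measurable[m₁] h ∧ (∀ i, MeasurableSet[m₂] (D i)) ∧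
    K = {ω | ω ∈ D (h ω)}}

lemma mosaic_eq_iUnion (h : Ω → ℕ) (D : ℕ → Set Ω) :
    {ω | ω ∈ D (h ω)} = ⋃ i, h ⁻¹' {i} ∩ D i := by
  ext ω
  simp

lemma isSetAlgebra_mosaics : IsSetAlgebra (mosaics m₁ m₂) where
  empty_mem := ⟨fun _ => 0, fun _ => ∅, measurable_const, fun _ => MeasurableSet.empty, by simp⟩
  compl_mem := by
    rintro _ ⟨h, D, hh, hD, rfl⟩
    exact ⟨h, fun i => (D i)ᶜ, hh, fun i => (hD i).compl, rfl⟩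
  union_mem := by
    rintro _ _ ⟨h, D, hh, hD, rfl⟩ ⟨h', D', hh', hD', rfl⟩
    refine ⟨fun ω => Nat.pair (h ω) (h' ω), fun i => D i.unpair.1 ∪ D' i.unpair.2, ?_,
      fun i => (hD _).union (hD' _), ?_⟩
    · exact (measurable_of_countable (fun p : ℕ × ℕ => Nat.pair p.1 p.2)).comp (hh.prodMk hh')
    · ext ω
      simp

lemma generateFrom_mosaics : MeasurableSpace.generateFrom (mosaics m₁ m₂) = m₁ ⊔ m₂ := by
  classical
  apply le_antisymm
  · refine MeasurableSpace.generateFrom_le ?_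
    rintro _ ⟨h, D, hh, hD, rfl⟩
    rw [mosaic_eq_iUnion]
    exact MeasurableSet.iUnion fun i => MeasurableSet.inter
      ((le_sup_left : m₁ ≤ m₁ ⊔ m₂) _ (hh (measurableSet_singleton i)))
      ((le_sup_right : m₂ ≤ m₁ ⊔ m₂) _ (hD i))
  · refine sup_le (fun s hs => ?_) (fun t ht => ?_)
    · refine MeasurableSpace.measurableSet_generateFrom
        ⟨fun ω => if ω ∈ s then 0 else 1, fun i => if i = 0 then Set.univ else ∅,
          Measurable.ite hs measurable_const measurable_const, fun i => ?_, ?_⟩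
      · dsimp only
        split_ifs
        exacts [MeasurableSet.univ, MeasurableSet.empty]
      · ext ω
        by_cases hω : ω ∈ s <;> simp [hω]
    · exact MeasurableSpace.measurableSet_generateFrom
        ⟨fun _ => 0, fun _ => t, measurable_const, fun _ => ht, rfl⟩

/-- An inequality between finite measures may be checked on a generating algebra of sets. -/
lemma measure_le_of_isSetAlgebra {ν ρ : Measure Ω} [IsFiniteMeasure ν] [IsFiniteMeasure ρ]
    {𝒜 : Set (Set Ω)} (h𝒜 : IsSetAlgebra 𝒜) (hgen : mΩ = MeasurableSpace.generateFrom 𝒜)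
    (h : ∀ L ∈ 𝒜, ν L ≤ ρ L) : ν ≤ ρ := by
  refine Measure.le_iff.2 fun K hK => ENNReal.le_of_forall_pos_le_add fun ε hε _ => ?_
  obtain ⟨L, hL, hKL⟩ := (Measure.MeasureDense.of_generateFrom_isSetAlgebra_finite (ν + ρ)
    h𝒜 hgen).approx K hK (measure_ne_top _ _) ε hε
  rw [Measure.add_apply, ENNReal.ofReal_coe_nnreal] at hKL
  calc ν K ≤ ν L + ν (symmDiff K L) := by
        refine (measure_mono fun ω hω => ?_).trans (measure_union_le _ _)
        by_cases h : ω ∈ L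
        · exact Or.inl h
        · exact Or.inr (Or.inl ⟨hω, h⟩)
    _ ≤ ρ L + ν (symmDiff K L) := add_le_add (h L hL) le_rfl
    _ ≤ ρ K + ρ (symmDiff K L) + ν (symmDiff K L) := by
        gcongr
        refine (measure_mono fun ω hω => ?_).trans (measure_union_le _ _)
        by_cases h : ω ∈ K
        · exact Or.inl h
        · exact Or.inr (Or.inr ⟨hω, h⟩)
    _ ≤ ρ K + ε := by
        rw [add_assoc, add_comm (ρ _) (ν _)]
        gcongr

/-- An inequality between finite measures on `m₁ ⊔ m₂` may be checked on rectangles. -/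
lemma measure_le_of_rectangles {ν ρ : Measure Ω} [IsFiniteMeasure ν] [IsFiniteMeasure ρ]
    (h₁ : m₁ ≤ mΩ) (h₂ : m₂ ≤ mΩ)
    (h : ∀ s t, MeasurableSet[m₁] s → MeasurableSet[m₂] t → ν (s ∩ t) ≤ ρ (s ∩ t))
    {K : Set Ω} (hK : MeasurableSet[m₁ ⊔ m₂] K) : ν K ≤ ρ K := by
  have hle : m₁ ⊔ m₂ ≤ mΩ := sup_le h₁ h₂
  have hmos : ∀ L ∈ mosaics m₁ m₂, ν L ≤ ρ L := by
    rintro _ ⟨p, D, hp, hD, rfl⟩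
    have hmeas : ∀ i, MeasurableSet (p ⁻¹' {i} ∩ D i) := fun i =>
      (h₁ _ (hp (measurableSet_singleton i))).inter (h₂ _ (hD i))
    have hdisj : Pairwise (Function.onFun Disjoint fun i => p ⁻¹' {i} ∩ D i) := fun i j hij =>
      (Disjoint.preimage p (Set.disjoint_singleton.2 hij)).mono
        Set.inter_subset_left Set.inter_subset_left
    rw [mosaic_eq_iUnion, measure_iUnion hdisj hmeas, measure_iUnion hdisj hmeas]
    exact ENNReal.tsum_le_tsum fun i => h _ _ (hp (measurableSet_singleton i)) (hD i)
  have htrim : ν.trim hle ≤ ρ.trim hle :=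
    @measure_le_of_isSetAlgebra Ω (m₁ ⊔ m₂) (ν.trim hle) (ρ.trim hle) (isFiniteMeasure_trim hle)
      (isFiniteMeasure_trim hle) _ isSetAlgebra_mosaics generateFrom_mosaics.symm fun L hL => by
        have hL' : MeasurableSet[m₁ ⊔ m₂] L :=
          generateFrom_mosaics ▸ MeasurableSpace.measurableSet_generateFrom hL
        rw [trim_measurableSet_eq hle hL', trim_measurableSet_eq hle hL']
        exact hmos L hL
  simpa only [trim_measurableSet_eq hle hK] using htrim K

lemma integrable_indicator_one [IsFiniteMeasure μ] {s : Set Ω} (hs : MeasurableSet s) :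
    Integrable (s.indicator fun _ => (1 : ℝ)) μ :=
  (integrable_const 1).indicator hs

lemma integrable_mul_condExp_indicator [IsFiniteMeasure μ] {f : Ω → ℝ} (hf : Integrable f μ)
    (m : MeasurableSpace Ω) (s : Set Ω) :
    Integrable (f * μ[s.indicator fun _ => (1 : ℝ) | m]) μ := by
  refine Integrable.mul_bdd (c := 1) hf integrable_condExp.aestronglyMeasurable ?_
  refine ae_bdd_abs_condExp_of_ae_bdd_abs (R := 1) (ae_of_all _ fun ω => ?_)
  by_cases h : ω ∈ s <;> simp [h]

lemma integrable_mul_indicator {f : Ω → ℝ} (hf : Integrable f μ) {s : Set Ω}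
    (hs : MeasurableSet s) : Integrable (f * s.indicator fun _ => (1 : ℝ)) μ := by
  have : (f * s.indicator fun _ => (1 : ℝ)) = s.indicator f := by
    ext ω
    by_cases h : ω ∈ s <;> simp [h]
  exact this ▸ hf.indicator hs

lemma setIntegral_mul_indicator (f : Ω → ℝ) {s : Set Ω} (hs : MeasurableSet s) (r : Set Ω) :
    ∫ ω in r, (f * s.indicator fun _ => (1 : ℝ)) ω ∂μ = ∫ ω in s ∩ r, f ω ∂μ := by
  rw [Set.inter_comm, ← setIntegral_indicator hs]
  congr 1
  ext ω
  by_cases h : ω ∈ s <;> simp [h]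

lemma setIntegral_indicator_one [IsFiniteMeasure μ] {s : Set Ω} (hs : MeasurableSet s)
    (r : Set Ω) : ∫ ω in r, s.indicator (fun _ => (1 : ℝ)) ω ∂μ = μ.real (s ∩ r) := by
  rw [setIntegral_indicator hs, Set.inter_comm]
  simp

/-- If `μ[f | m₂] = μ[f | m]`, the same holds for every σ-algebra between `m` and `m₂`. -/
lemma condExp_ae_eq_of_between [IsFiniteMeasure μ] (h : m ≤ m₁) (h₁ : m₁ ≤ m₂) (h₂ : m₂ ≤ mΩ)
    {f : Ω → ℝ} (hf : μ[f | m₂] =ᵐ[μ] μ[f | m]) : μ[f | m₁] =ᵐ[μ] μ[f | m] :=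
  calc μ[f | m₁] =ᵐ[μ] μ[μ[f | m₂] | m₁] := (condExp_condExp_of_le h₁ h₂).symm
    _ =ᵐ[μ] μ[μ[f | m] | m₁] := condExp_congr_ae hf
    _ = μ[f | m] := condExp_of_stronglyMeasurable (h₁.trans h₂)
        (stronglyMeasurable_condExp.mono h) integrable_condExp

/-- Given `m`, the σ-algebra `m₂` carries no further information about the events of `m₁`.
When `m ≤ m₂` this is conditional independence of `m₁` and `m₂` given `m`. -/
def Screens (μ : Measure Ω) (m m₁ m₂ : MeasurableSpace Ω) : Prop :=
  ∀ s, MeasurableSet[m₁] s →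
    μ[s.indicator fun _ => (1 : ℝ) | m₂] =ᵐ[μ] μ[s.indicator fun _ => (1 : ℝ) | m]

namespace Screens

lemma mono_left (h : Screens μ m m₁ m₂) (h₃ : m₃ ≤ m₁) : Screens μ m m₃ m₂ :=
  fun s hs => h s (h₃ s hs)

lemma mono_right [IsFiniteMeasure μ] (h : Screens μ m m₁ m₂) (h₃ : m ≤ m₃) (h₃₂ : m₃ ≤ m₂)
    (h₂ : m₂ ≤ mΩ) : Screens μ m m₁ m₃ :=
  fun s hs => condExp_ae_eq_of_between h₃ h₃₂ h₂ (h s hs)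

/-- Weak union: the screening σ-algebra may be enlarged inside `m₂`. -/
lemma weak_union [IsFiniteMeasure μ] (h : Screens μ m m₁ m₂) (h₃ : m ≤ m₃) (h₃₂ : m₃ ≤ m₂)
    (h₂ : m₂ ≤ mΩ) : Screens μ m₃ m₁ m₂ :=
  fun s hs => (h s hs).trans (h.mono_right h₃ h₃₂ h₂ s hs).symm

lemma of_le [IsFiniteMeasure μ] (h₁ : m₁ ≤ m) (h : m ≤ m₂) (h₂ : m₂ ≤ mΩ) :
    Screens μ m m₁ m₂ := fun s hs => by
  have hs' : StronglyMeasurable[m₁] (s.indicator fun _ => (1 : ℝ)) :=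
    (@stronglyMeasurable_const _ _ m₁ _ _).indicator hs
  have hi : Integrable (s.indicator fun _ => (1 : ℝ)) μ :=
    integrable_indicator_one ((h₁.trans (h.trans h₂)) s hs)
  rw [condExp_of_stronglyMeasurable h₂ (hs'.mono (h₁.trans h)) hi,
    condExp_of_stronglyMeasurable (h.trans h₂) (hs'.mono h₁) hi]

/-- Screening is symmetric, in a form that applies to integrable functions. -/
lemma condExp_eq [IsFiniteMeasure μ] (h : Screens μ m m₁ m₂) (h₁ : m₁ ≤ mΩ) (hm : m ≤ m₂)
    (h₂ : m₂ ≤ mΩ) {f : Ω → ℝ} (hfm : StronglyMeasurable[m₂] f) (hf : Integrable f μ) :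
    μ[f | m₁ ⊔ m] =ᵐ[μ] μ[f | m] := by
  have hmΩ := hm.trans h₂
  have key : ∀ s r, MeasurableSet[m₁] s → MeasurableSet[m] r →
      ∫ ω in s ∩ r, f ω ∂μ = ∫ ω in s ∩ r, (μ[f | m]) ω ∂μ := by
    intro s r hs hr
    set I : Ω → ℝ := s.indicator fun _ => 1
    have hsΩ := h₁ s hs
    have hIi : Integrable I μ := integrable_indicator_one hsΩ
    have hfI : Integrable (f * I) μ := integrable_mul_indicator hf hsΩ
    have hfI' : Integrable (f * μ[I | m]) μ := integrable_mul_condExp_indicator hf m s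
    have hcI : Integrable (μ[f | m] * I) μ := integrable_mul_indicator integrable_condExp hsΩ
    have e₁ : μ[f * I | m₂] =ᵐ[μ] f * μ[I | m] :=
      (condExp_mul_of_stronglyMeasurable_left hfm hfI hIi).trans
        ((EventuallyEq.refl _ f).mul (h s hs))
    have e₂ : μ[f * μ[I | m] | m] =ᵐ[μ] μ[f | m] * μ[I | m] :=
      condExp_mul_of_stronglyMeasurable_right stronglyMeasurable_condExp hfI' hf
    have e₃ : μ[μ[f | m] * I | m] =ᵐ[μ] μ[f | m] * μ[I | m] :=
      condExp_mul_of_stronglyMeasurable_left stronglyMeasurable_condExp hcI hIi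
    calc ∫ ω in s ∩ r, f ω ∂μ = ∫ ω in r, (f * I) ω ∂μ :=
          (setIntegral_mul_indicator f hsΩ r).symm
      _ = ∫ ω in r, (μ[f * I | m₂]) ω ∂μ := (setIntegral_condExp h₂ hfI (hm r hr)).symm
      _ = ∫ ω in r, (f * μ[I | m]) ω ∂μ := integral_congr_ae (ae_restrict_of_ae e₁)
      _ = ∫ ω in r, (μ[f * μ[I | m] | m]) ω ∂μ := (setIntegral_condExp hmΩ hfI' hr).symm
      _ = ∫ ω in r, (μ[μ[f | m] * I | m]) ω ∂μ :=
          integral_congr_ae (ae_restrict_of_ae (e₂.trans e₃.symm))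
      _ = ∫ ω in r, (μ[f | m] * I) ω ∂μ := setIntegral_condExp hmΩ hcI hr
      _ = ∫ ω in s ∩ r, (μ[f | m]) ω ∂μ := setIntegral_mul_indicator _ hsΩ r
  refine (ae_eq_condExp_of_forall_setIntegral_eq (sup_le h₁ hmΩ) hf
    (fun _ _ _ => integrable_condExp.integrableOn) (fun K hK _ => ?_)
    ((stronglyMeasurable_condExp (m := m)).mono
      (le_sup_right : m ≤ m₁ ⊔ m)).aestronglyMeasurable).symm
  have h0 := setIntegral_eq_zero_of_rectangles h₁ hmΩ (hf.sub integrable_condExp)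
    (f := f - μ[f | m]) (fun s r hs hr => by
      simp only [Pi.sub_apply]
      rw [integral_sub hf.integrableOn integrable_condExp.integrableOn, key s r hs hr, sub_self])
    hK
  simp only [Pi.sub_apply] at h0
  rw [integral_sub hf.integrableOn integrable_condExp.integrableOn] at h0
  linarith

lemma symm [IsFiniteMeasure μ] (h : Screens μ m m₁ m₂) (h₁ : m₁ ≤ mΩ) (hm : m ≤ m₂)
    (h₂ : m₂ ≤ mΩ) : Screens μ m m₂ (m₁ ⊔ m) := fun s hs =>
  h.condExp_eq h₁ hm h₂ ((@stronglyMeasurable_const _ _ m₂ _ _).indicator hs)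
    (integrable_indicator_one (h₂ s hs))

end Screens

/-- Bounds on `μ (s ∩ K)` for `K` in `m` bound the conditional probability of `s` given `m`. -/
lemma condExp_indicator_le [IsFiniteMeasure μ] (hm : m ≤ mΩ) {s : Set Ω} (hs : MeasurableSet s)
    {c : ℝ} (h : ∀ K, MeasurableSet[m] K → μ.real (s ∩ K) ≤ c * μ.real K) :
    ∀ᵐ ω ∂μ, (μ[s.indicator fun _ => (1 : ℝ) | m]) ω ≤ c := by
  have hi : Integrable (s.indicator fun _ => (1 : ℝ)) μ := integrable_indicator_one hs
  refine ae_le_of_ae_le_trim (hm := hm) (ae_le_of_forall_setIntegral_le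
    (integrable_condExp.trim hm stronglyMeasurable_condExp) (integrable_const c)
    fun K hK _ => ?_)
  rw [← setIntegral_trim hm stronglyMeasurable_condExp hK, setIntegral_condExp hm hi hK,
    setIntegral_indicator_one hs, setIntegral_const, measureReal_def (μ.trim hm),
    trim_measurableSet_eq hm hK, smul_eq_mul, mul_comm]
  exact h K hK

lemma le_condExp_indicator [IsFiniteMeasure μ] (hm : m ≤ mΩ) {s : Set Ω} (hs : MeasurableSet s)
    {c : ℝ} (h : ∀ K, MeasurableSet[m] K → c * μ.real K ≤ μ.real (s ∩ K)) :
    ∀ᵐ ω ∂μ, c ≤ (μ[s.indicator fun _ => (1 : ℝ) | m]) ω := by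
  have hi : Integrable (s.indicator fun _ => (1 : ℝ)) μ := integrable_indicator_one hs
  refine ae_le_of_ae_le_trim (hm := hm) (ae_le_of_forall_setIntegral_le
    (integrable_const c) (integrable_condExp.trim hm stronglyMeasurable_condExp)
    fun K hK _ => ?_)
  rw [← setIntegral_trim hm stronglyMeasurable_condExp hK, setIntegral_condExp hm hi hK,
    setIntegral_indicator_one hs, setIntegral_const, measureReal_def (μ.trim hm),
    trim_measurableSet_eq hm hK, smul_eq_mul, mul_comm]
  exact h K hK

/-- Bounds on the conditional probability of `s` given `m` bound `μ (s ∩ K)` for `K` in `m`. -/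
lemma measureReal_inter_mem_Icc [IsFiniteMeasure μ] (hm : m ≤ mΩ) {s : Set Ω}
    (hs : MeasurableSet s) {a b : ℝ}
    (h : ∀ᵐ ω ∂μ, (μ[s.indicator fun _ => (1 : ℝ) | m]) ω ∈ Set.Icc a b)
    {K : Set Ω} (hK : MeasurableSet[m] K) :
    μ.real (s ∩ K) ∈ Set.Icc (a * μ.real K) (b * μ.real K) := by
  have hi : Integrable (s.indicator fun _ => (1 : ℝ)) μ := integrable_indicator_one hs
  have hconst : ∀ c : ℝ, ∫ _ in K, c ∂μ = c * μ.real K := fun c => by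
    rw [setIntegral_const, smul_eq_mul, mul_comm]
  rw [← setIntegral_indicator_one hs, ← setIntegral_condExp hm hi hK, ← hconst, ← hconst]
  exact ⟨integral_mono_ae (integrable_const _) integrable_condExp.integrableOn
      (ae_restrict_of_ae (h.mono fun _ hω => hω.1)),
    integral_mono_ae integrable_condExp.integrableOn (integrable_const _)
      (ae_restrict_of_ae (h.mono fun _ hω => hω.2))⟩

/-- Inequalities `μ (s ∩ K) ≤ c * μ K` may be checked on rectangles. -/
lemma measureReal_inter_le_of_rectangles [IsFiniteMeasure μ] (h₁ : m₁ ≤ mΩ) (h₂ : m₂ ≤ mΩ)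
    {s : Set Ω} (hs : MeasurableSet s) {c : ℝ} (hc : 0 ≤ c)
    (h : ∀ H D, MeasurableSet[m₁] H → MeasurableSet[m₂] D →
      μ.real (s ∩ (H ∩ D)) ≤ c * μ.real (H ∩ D))
    {K : Set Ω} (hK : MeasurableSet[m₁ ⊔ m₂] K) : μ.real (s ∩ K) ≤ c * μ.real K := by
  have e : ∀ L, μ.restrict s L ≤ (c.toNNReal • μ) L ↔ μ.real (s ∩ L) ≤ c * μ.real L := fun L => by
    rw [← ENNReal.toReal_le_toReal (measure_ne_top _ _) (measure_ne_top _ _), ← measureReal_def,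
      ← measureReal_def, measureReal_restrict_apply' hs, measureReal_nnreal_smul_apply,
      Real.coe_toNNReal c hc, Set.inter_comm]
  exact (e K).1 (measure_le_of_rectangles h₁ h₂ (fun H D hH hD => (e _).2 (h H D hH hD)) hK)

lemma le_measureReal_inter_of_rectangles [IsFiniteMeasure μ] (h₁ : m₁ ≤ mΩ) (h₂ : m₂ ≤ mΩ)
    {s : Set Ω} (hs : MeasurableSet s) {c : ℝ} (hc : 0 ≤ c)
    (h : ∀ H D, MeasurableSet[m₁] H → MeasurableSet[m₂] D →
      c * μ.real (H ∩ D) ≤ μ.real (s ∩ (H ∩ D)))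
    {K : Set Ω} (hK : MeasurableSet[m₁ ⊔ m₂] K) : c * μ.real K ≤ μ.real (s ∩ K) := by
  have e : ∀ L, (c.toNNReal • μ) L ≤ μ.restrict s L ↔ c * μ.real L ≤ μ.real (s ∩ L) := fun L => by
    rw [← ENNReal.toReal_le_toReal (measure_ne_top _ _) (measure_ne_top _ _), ← measureReal_def,
      ← measureReal_def, measureReal_restrict_apply' hs, measureReal_nnreal_smul_apply,
      Real.coe_toNNReal c hc, Set.inter_comm]
  exact (e K).1 (measure_le_of_rectangles h₁ h₂ (fun H D hH hD => (e _).2 (h H D hH hD)) hK)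

end CondExp
end EdgeworthMC

namespace EdgeworthMC

section Chain

variable {Ω E : Type*} [MeasurableSpace E]

/-- The σ-algebra generated by `X_n`, `n ∈ T`. -/
def timeSigma (X : ℕ → Ω → E) (T : Set ℕ) : MeasurableSpace Ω :=
  ⨆ n ∈ T, MeasurableSpace.comap (X n) (inferInstance : MeasurableSpace E)

lemma timeSigma_mono (X : ℕ → Ω → E) {T T' : Set ℕ} (h : T ⊆ T') :
    timeSigma X T ≤ timeSigma X T' :=
  biSup_mono h

lemma timeSigma_union (X : ℕ → Ω → E) (T T' : Set ℕ) :
    timeSigma X (T ∪ T') = timeSigma X T ⊔ timeSigma X T' := by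
  simp only [timeSigma, _root_.iSup_union]

lemma timeSigma_singleton (X : ℕ → Ω → E) (n : ℕ) :
    timeSigma X {n} = MeasurableSpace.comap (X n) inferInstance :=
  iSup_singleton

lemma timeSigma_range (X : ℕ → Ω → E) {ι : Type*} (j : ι → ℕ) :
    timeSigma X (Set.range j) = ⨆ i, MeasurableSpace.comap (X (j i)) inferInstance :=
  iSup_range

lemma timeSigma_Iic (X : ℕ → Ω → E) (n : ℕ) :
    timeSigma X (Set.Iic n) = ⨆ i : Fin (n + 1), MeasurableSpace.comap (X i) inferInstance := by
  rw [← timeSigma_range]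
  congr 1
  ext k
  simp only [Set.mem_Iic, Set.mem_range]
  exact ⟨fun h => ⟨⟨k, by omega⟩, rfl⟩, fun ⟨i, hi⟩ => by omega⟩

lemma timeSigma_Ici (X : ℕ → Ω → E) (n : ℕ) :
    timeSigma X (Set.Ici n) = ⨆ k, timeSigma X (Set.Icc n (n + k)) := by
  apply le_antisymm
  · refine iSup₂_le fun i hi => le_iSup_of_le (i - n) ?_
    have hi' : n ≤ i := hi
    exact le_iSup₂_of_le i ⟨hi', by omega⟩ le_rfl
  · exact iSup_le fun k => timeSigma_mono X Set.Icc_subset_Ici_self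

variable [mΩ : MeasurableSpace Ω]

lemma timeSigma_le {X : ℕ → Ω → E} (hX : ∀ n, Measurable (X n)) (T : Set ℕ) :
    timeSigma X T ≤ mΩ :=
  iSup₂_le fun n _ => (hX n).comap_le

variable {μ : Measure Ω} {X : ℕ → Ω → E} {κ : ℕ → Kernel E E} {C : ℝ}

lemma condExp_ae_eq_of_stronglyMeasurable {m M : MeasurableSpace Ω} (hm : m ≤ M) (hM : M ≤ mΩ)
    [IsFiniteMeasure μ] {f g : Ω → ℝ} (hg : StronglyMeasurable[m] g)
    (h : μ[f | M] =ᵐ[μ] g) : μ[f | M] =ᵐ[μ] μ[f | m] :=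
  calc μ[f | M] =ᵐ[μ] g := h
    _ = μ[g | m] := (condExp_of_stronglyMeasurable (hm.trans hM) hg
        (integrable_condExp.congr h)).symm
    _ =ᵐ[μ] μ[μ[f | M] | m] := condExp_congr_ae h.symm
    _ =ᵐ[μ] μ[f | m] := condExp_condExp_of_le hm hM

namespace UEChain

lemma screens_step (h : UEChain μ X κ C) (n : ℕ) :
    Screens μ (timeSigma X {n}) (timeSigma X {n + 1}) (timeSigma X (Set.Iic n)) := by
  obtain ⟨_, hX, _, hmarkov, -⟩ := h
  intro s hs
  rw [timeSigma_singleton] at hs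
  obtain ⟨A, hA, rfl⟩ := hs
  refine condExp_ae_eq_of_stronglyMeasurable (g := fun ω => (κ n (X n ω) A).toReal)
    (timeSigma_mono X (by simp)) (timeSigma_le hX _) ?_ ?_
  · rw [timeSigma_singleton]
    exact (((κ n).measurable_coe hA).ennreal_toReal.comp
      (comap_measurable (X n))).stronglyMeasurable
  · rw [timeSigma_Iic]
    exact hmarkov n A hA

lemma screens_Icc (h : UEChain μ X κ C) (k n : ℕ) :
    Screens μ (timeSigma X {n}) (timeSigma X (Set.Icc n (n + k))) (timeSigma X (Set.Iic n)) := by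
  have : IsProbabilityMeasure μ := h.1
  have hle := timeSigma_le h.2.1
  have hn : ∀ n, timeSigma X {n} ≤ timeSigma X (Set.Iic n) := fun n =>
    timeSigma_mono X (by simp)
  induction k generalizing n with
  | zero =>
    rw [add_zero, Set.Icc_self]
    exact Screens.of_le le_rfl (hn n) (hle _)
  | succ k ih =>
    have hstep : Screens μ (timeSigma X {n}) (timeSigma X (Set.Icc (n + 1) (n + 1 + k)))
        (timeSigma X (Set.Iic n)) := by
      intro D hD
      set I : Ω → ℝ := D.indicator fun _ => 1
      have hpast : μ[μ[I | timeSigma X {n + 1}] | timeSigma X (Set.Iic n)]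
          =ᵐ[μ] μ[μ[I | timeSigma X {n + 1}] | timeSigma X {n}] := by
        have h1 := ((h.screens_step n).symm (hle _) (hn n) (hle _)).condExp_eq (hle _)
          le_sup_right (sup_le (hle _) (hle _))
          ((stronglyMeasurable_condExp (f := I) (μ := μ)).mono
            (le_sup_left : timeSigma X {n + 1} ≤ _)) integrable_condExp
        rwa [sup_eq_left.2 (hn n)] at h1
      refine condExp_ae_eq_of_stronglyMeasurable (hn n) (hle _)
        (stronglyMeasurable_condExp (f := μ[I | timeSigma X {n + 1}]) (μ := μ)) ?_
      calc μ[I | timeSigma X (Set.Iic n)]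
          =ᵐ[μ] μ[μ[I | timeSigma X (Set.Iic (n + 1))] | timeSigma X (Set.Iic n)] :=
            (condExp_condExp_of_le (timeSigma_mono X (Set.Iic_subset_Iic.2 n.le_succ))
              (hle _)).symm
        _ =ᵐ[μ] μ[μ[I | timeSigma X {n + 1}] | timeSigma X (Set.Iic n)] :=
            condExp_congr_ae (ih (n + 1) D hD)
        _ =ᵐ[μ] _ := hpast
    have h2 := (hstep.symm (hle _) (hn n) (hle _)).symm (hle _) le_sup_right
      (sup_le (hle _) (hle _))
    rw [sup_eq_left.2 (hn n), ← timeSigma_union] at h2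
    refine h2.mono_left (timeSigma_mono X fun i hi => ?_)
    simp only [Set.mem_Icc, Set.mem_union, Set.mem_singleton_iff] at hi ⊢
    omega

/-- The Markov property, from the point of view of the past. -/
lemma screens_past (h : UEChain μ X κ C) (n : ℕ) :
    Screens μ (timeSigma X {n}) (timeSigma X (Set.Iic n)) (timeSigma X (Set.Ici n)) := by
  have : IsProbabilityMeasure μ := h.1
  have hle := timeSigma_le h.2.1
  intro s hs
  let ℱ : Filtration ℕ mΩ :=
    { seq := fun k => timeSigma X (Set.Icc n (n + k))
      mono' := fun i j hij => timeSigma_mono X (Set.Icc_subset_Icc_right (by omega))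
      le' := fun k => hle _ }
  have hfin : ∀ k, μ[s.indicator fun _ => (1 : ℝ) | ℱ k]
      =ᵐ[μ] μ[s.indicator fun _ => (1 : ℝ) | timeSigma X {n}] := fun k => by
    have hk := (h.screens_Icc k n).symm (hle _) (timeSigma_mono X (by simp)) (hle _)
    rw [sup_eq_left.2 (timeSigma_mono X (by simp))] at hk
    exact hk s hs
  have hlim := tendsto_ae_condExp (ℱ := ℱ) (μ := μ) (s.indicator fun _ => (1 : ℝ))
  rw [timeSigma_Ici]
  filter_upwards [hlim, ae_all_iff.2 hfin] with ω hω hω'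
  exact tendsto_nhds_unique hω (tendsto_const_nhds.congr fun k => (hω' k).symm)

/-- The Markov property, from the point of view of the future. -/
lemma screens_future (h : UEChain μ X κ C) (n : ℕ) :
    Screens μ (timeSigma X {n}) (timeSigma X (Set.Ici n)) (timeSigma X (Set.Iic n)) := by
  have : IsProbabilityMeasure μ := h.1
  have hle := timeSigma_le h.2.1
  have hs := (h.screens_past n).symm (hle _) (timeSigma_mono X (by simp)) (hle _)
  rwa [sup_eq_left.2 (timeSigma_mono X (by simp))] at hs

lemma measureReal_inter_step (h : UEChain μ X κ C) (hC : 0 < C) {n : ℕ} {K H : Set Ω}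
    (hK : MeasurableSet[timeSigma X {n + 1}] K) (hH : MeasurableSet[timeSigma X (Set.Iic n)] H) :
    μ.real (K ∩ H) ∈ Set.Icc (C⁻¹ * μ.real K * μ.real H) (C * μ.real K * μ.real H) := by
  obtain ⟨_, hX, _, hmarkov, hell⟩ := h
  refine measureReal_inter_mem_Icc (timeSigma_le hX _) (timeSigma_le hX _ K hK) ?_ hH
  rw [timeSigma_singleton] at hK
  obtain ⟨A, hA, rfl⟩ := hK
  have hmap : (Measure.map (X (n + 1)) μ A).toReal = μ.real (X (n + 1) ⁻¹' A) := by
    rw [Measure.map_apply (hX _) hA, measureReal_def]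
  rw [timeSigma_Iic]
  filter_upwards [hmarkov n A hA, hell n A hA] with ω hω hω'
  have e : (μ[(X (n + 1) ⁻¹' A).indicator fun _ => (1 : ℝ) |
      ⨆ i : Fin (n + 1), MeasurableSpace.comap (X i) inferInstance]) ω
        = (κ n (X n ω) A).toReal := hω
  have hfin : Measure.map (X (n + 1)) μ A ≠ ∞ := by
    rw [Measure.map_apply (hX _) hA]
    exact measure_ne_top _ _
  have h1 := ENNReal.toReal_mono (ENNReal.mul_ne_top ENNReal.ofReal_ne_top hfin) hω'.1
  have h2 := ENNReal.toReal_mono (ENNReal.mul_ne_top ENNReal.ofReal_ne_top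
    (measure_ne_top (κ n (X n ω)) A)) hω'.2
  rw [ENNReal.toReal_mul, ENNReal.toReal_ofReal hC.le, hmap] at h1 h2
  rw [e]
  exact ⟨(inv_mul_le_iff₀ hC).2 h2, h1⟩

/-- Uniform ellipticity for the whole future. -/
lemma measureReal_inter (h : UEChain μ X κ C) (hC : 0 < C) {n : ℕ} {H D : Set Ω}
    (hH : MeasurableSet[timeSigma X (Set.Iic n)] H)
    (hD : MeasurableSet[timeSigma X (Set.Ici (n + 1))] D) :
    μ.real (H ∩ D) ∈ Set.Icc (C⁻¹ * μ.real H * μ.real D) (C * μ.real H * μ.real D) := by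
  have : IsProbabilityMeasure μ := h.1
  have hle := timeSigma_le h.2.1
  refine measureReal_inter_mem_Icc (hle _) (hle _ H hH) ?_ hD
  have hup := condExp_indicator_le (hle {n + 1}) (hle _ H hH) (μ := μ) (c := C * μ.real H)
    fun K hK => by
      rw [Set.inter_comm, mul_right_comm]
      exact (h.measureReal_inter_step hC hK hH).2
  have hlow := le_condExp_indicator (hle {n + 1}) (hle _ H hH) (μ := μ) (c := C⁻¹ * μ.real H)
    fun K hK => by
      rw [Set.inter_comm, mul_right_comm]
      exact (h.measureReal_inter_step hC hK hH).1
  filter_upwards [hup, hlow, h.screens_past (n + 1) H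
    (timeSigma_mono X (Set.Iic_subset_Iic.2 n.le_succ) H hH)] with ω h1 h2 h3
  rw [h3]
  exact ⟨h2, h1⟩

/-- Conditioning on any set of times avoiding `n + 1` changes the law of `X_{n+1}` by a factor
at most `C ^ 3`. -/
lemma condExp_indicator_mem_Icc (h : UEChain μ X κ C) (hC : 0 < C) {n : ℕ} {T : Set ℕ}
    (hT : n + 1 ∉ T) {A : Set Ω} (hA : MeasurableSet[timeSigma X {n + 1}] A) :
    ∀ᵐ ω ∂μ, (μ[A.indicator fun _ => (1 : ℝ) | timeSigma X T]) ω ∈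
      Set.Icc ((C ^ 3)⁻¹ * μ.real A) (C ^ 3 * μ.real A) := by
  have : IsProbabilityMeasure μ := h.1
  have hle := timeSigma_le h.2.1
  have hTle : timeSigma X T ≤ timeSigma X (Set.Iic n) ⊔ timeSigma X (Set.Ici (n + 2)) := by
    rw [← timeSigma_union]
    refine timeSigma_mono X fun i hi => ?_
    have : i ≠ n + 1 := fun h => hT (h ▸ hi)
    simp only [Set.mem_union, Set.mem_Iic, Set.mem_Ici]
    omega
  have hrect : ∀ H D, MeasurableSet[timeSigma X (Set.Iic n)] H →
      MeasurableSet[timeSigma X (Set.Ici (n + 2))] D →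
      μ.real (A ∩ (H ∩ D)) ∈ Set.Icc ((C ^ 3)⁻¹ * μ.real A * μ.real (H ∩ D))
        (C ^ 3 * μ.real A * μ.real (H ∩ D)) := by
    intro H D hH hD
    have hAH : MeasurableSet[timeSigma X (Set.Iic (n + 1))] (A ∩ H) :=
      MeasurableSet.inter (timeSigma_mono X (by simp) A hA)
        (timeSigma_mono X (Set.Iic_subset_Iic.2 n.le_succ) H hH)
    have h1 := h.measureReal_inter hC hAH hD
    have h2 := h.measureReal_inter_step hC hA hH
    have h3 := h.measureReal_inter hC hH
      (timeSigma_mono X (Set.Ici_subset_Ici.2 (n + 1).le_succ) D hD)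
    rw [← Set.inter_assoc]
    have hD0 : 0 ≤ μ.real D := measureReal_nonneg
    have hA0 : 0 ≤ μ.real A := measureReal_nonneg
    have hHD := (inv_mul_le_iff₀ hC).1 ((mul_assoc _ _ _).symm.trans_le h3.1)
    constructor
    · calc (C ^ 3)⁻¹ * μ.real A * μ.real (H ∩ D)
          ≤ (C ^ 3)⁻¹ * μ.real A * (C * μ.real H * μ.real D) := by gcongr; exact h3.2
        _ = C⁻¹ * (C⁻¹ * μ.real A * μ.real H) * μ.real D := by field_simp
        _ ≤ C⁻¹ * μ.real (A ∩ H) * μ.real D := by gcongr; exact h2.1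
        _ ≤ μ.real (A ∩ H ∩ D) := h1.1
    · calc μ.real (A ∩ H ∩ D) ≤ C * μ.real (A ∩ H) * μ.real D := h1.2
        _ ≤ C * (C * μ.real A * μ.real H) * μ.real D := by gcongr; exact h2.2
        _ = C ^ 2 * μ.real A * (μ.real H * μ.real D) := by ring
        _ ≤ C ^ 2 * μ.real A * (C * μ.real (H ∩ D)) := by gcongr
        _ = C ^ 3 * μ.real A * μ.real (H ∩ D) := by ring
  have hAΩ := hle _ A hA
  have hup := condExp_indicator_le (hle T) hAΩ (μ := μ) (c := C ^ 3 * μ.real A) fun K hK =>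
    measureReal_inter_le_of_rectangles (hle _) (hle _) hAΩ (by positivity)
      (fun H D hH hD => (hrect H D hH hD).2) (hTle K hK)
  have hlow := le_condExp_indicator (hle T) hAΩ (μ := μ) (c := (C ^ 3)⁻¹ * μ.real A) fun K hK =>
    le_measureReal_inter_of_rectangles (hle _) (hle _) hAΩ (by positivity)
      (fun H D hH hD => (hrect H D hH hD).1) (hTle K hK)
  filter_upwards [hup, hlow] with ω h1 h2 using ⟨h2, h1⟩

/-- Given the variables at the endpoints of a block, the variables outside the block carry no
further information about those in the block. -/
lemma condExp_block (h : UEChain μ X κ C) {P B Q L U : Set ℕ} (hLP : L ⊆ P) (hUQ : U ⊆ Q)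
    (hP : Screens μ (timeSigma X L) (timeSigma X P) (timeSigma X (L ∪ B ∪ Q)))
    (hQ : Screens μ (timeSigma X U) (timeSigma X Q) (timeSigma X (L ∪ B ∪ U)))
    {T : Set ℕ} (hT : L ∪ U ⊆ T) (hT' : T ⊆ P ∪ Q) {g : Ω → ℝ}
    (hgm : StronglyMeasurable[timeSigma X B] g) (hg : Integrable g μ) :
    μ[g | timeSigma X (P ∪ Q)] =ᵐ[μ] μ[g | timeSigma X T] := by
  have : IsProbabilityMeasure μ := h.1
  have hle := timeSigma_le h.2.1
  have e₁ : μ[g | timeSigma X (P ∪ Q)] =ᵐ[μ] μ[g | timeSigma X (L ∪ Q)] := by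
    have hLQ : L ∪ Q ⊆ L ∪ B ∪ Q := Set.union_subset_union_left Q Set.subset_union_left
    have h1 := (hP.weak_union (timeSigma_mono X Set.subset_union_left) (timeSigma_mono X hLQ)
      (hle _)).condExp_eq (hle _) (timeSigma_mono X hLQ) (hle _)
      (hgm.mono (timeSigma_mono X (Set.subset_union_right.trans Set.subset_union_left))) hg
    rwa [← timeSigma_union, ← Set.union_assoc, Set.union_eq_left.2 hLP] at h1
  have e₂ : μ[g | timeSigma X (L ∪ Q)] =ᵐ[μ] μ[g | timeSigma X (L ∪ U)] := by
    have hLU : L ∪ U ⊆ L ∪ B ∪ U := Set.union_subset_union_left U Set.subset_union_left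
    have h1 := (hQ.weak_union (timeSigma_mono X Set.subset_union_right) (timeSigma_mono X hLU)
      (hle _)).condExp_eq (hle _) (timeSigma_mono X hLU) (hle _)
      (hgm.mono (timeSigma_mono X (Set.subset_union_right.trans Set.subset_union_left))) hg
    rwa [← timeSigma_union, Set.union_left_comm, Set.union_eq_left.2 hUQ] at h1
  have e := e₁.trans e₂
  exact e.trans (condExp_ae_eq_of_between (timeSigma_mono X hT) (timeSigma_mono X hT')
    (hle _) e).symm

end UEChain

section Blocks

variable {d : ℕ} {nn : Fin d → ℕ}

lemma blockLower_of_pos (nn : Fin d → ℕ) {s : Fin (d + 1)} (hs : 0 < (s : ℕ)) :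
    blockLower nn s = nn ⟨(s : ℕ) - 1, by have := s.isLt; omega⟩ :=
  dif_pos hs

lemma blockUpper_of_lt (nn : Fin d → ℕ) {s : Fin (d + 1)} (hs : (s : ℕ) < d) :
    blockUpper nn s = (nn ⟨(s : ℕ), hs⟩ : WithTop ℕ) :=
  dif_pos hs

lemma blockUpper_of_not_lt (nn : Fin d → ℕ) {s : Fin (d + 1)} (hs : ¬ (s : ℕ) < d) :
    blockUpper nn s = ⊤ :=
  dif_neg hs

/-- The times up to the left endpoint of the block `s`; empty for the first block. -/
def timesBefore (nn : Fin d → ℕ) (s : Fin (d + 1)) : Set ℕ :=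
  {k | 0 < (s : ℕ) ∧ k ≤ blockLower nn s}

/-- The times from the right endpoint of the block `s` on. -/
def timesAfter (nn : Fin d → ℕ) (s : Fin (d + 1)) : Set ℕ :=
  {k | blockUpper nn s ≤ (k : WithTop ℕ)}

/-- The left endpoint of the block `s`, as a set which is empty for the first block. -/
def leftEnd (nn : Fin d → ℕ) (s : Fin (d + 1)) : Set ℕ :=
  {k | 0 < (s : ℕ) ∧ k = blockLower nn s}

/-- The right endpoint of the block `s`, as a set which is empty for the last block. -/
def rightEnd (nn : Fin d → ℕ) (s : Fin (d + 1)) : Set ℕ :=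
  {k | (k : WithTop ℕ) = blockUpper nn s}

lemma blockLower_lt_of_mem_timesAfter (hmono : StrictMono nn) {s : Fin (d + 1)}
    (hs : 0 < (s : ℕ)) {k : ℕ} (hk : k ∈ timesAfter nn s) : blockLower nn s < k := by
  by_cases hd : (s : ℕ) < d
  · simp only [timesAfter, Set.mem_ofPred_eq, blockUpper_of_lt nn hd, Nat.cast_le] at hk
    rw [blockLower_of_pos nn hs]
    exact (hmono (Fin.mk_lt_mk.2 (by omega))).trans_le hk
  · simp [timesAfter, blockUpper_of_not_lt nn hd] at hk

lemma range_subset_timesBefore_union_timesAfter (hmono : StrictMono nn) (s : Fin (d + 1)) :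
    Set.range nn ⊆ timesBefore nn s ∪ timesAfter nn s := by
  rintro _ ⟨i, rfl⟩
  rcases lt_or_ge (i : ℕ) (s : ℕ) with hi | hi
  · refine Or.inl ⟨by omega, ?_⟩
    rw [blockLower_of_pos nn (by omega)]
    exact hmono.monotone (Fin.le_def.2 (by simp only; omega))
  · refine Or.inr ?_
    rw [timesAfter, Set.mem_ofPred_eq, blockUpper_of_lt nn (by omega), Nat.cast_le]
    exact hmono.monotone (Fin.le_def.2 hi)

lemma blockSet_subset_timesBefore_union_timesAfter (hmono : StrictMono nn) {s t : Fin (d + 1)}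
    (hst : t ≠ s) : blockSet nn t ⊆ timesBefore nn s ∪ timesAfter nn s := by
  rintro k ⟨hk, hk'⟩
  rcases lt_or_gt_of_ne (Fin.val_ne_of_ne hst) with hlt | hlt
  · refine Or.inl ⟨by omega, ?_⟩
    rw [blockUpper_of_lt nn (by omega), Nat.cast_lt] at hk'
    rw [blockLower_of_pos nn (by omega)]
    exact hk'.le.trans (hmono.monotone (Fin.le_def.2 (by simp only; omega)))
  · refine Or.inr ?_
    rw [blockLower_of_pos nn (by omega)] at hk
    rw [timesAfter, Set.mem_ofPred_eq, blockUpper_of_lt nn (by omega), Nat.cast_le]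
    exact (hmono.monotone (Fin.le_def.2 (by simp only; omega))).trans hk.le

lemma leftEnd_subset_timesBefore (nn : Fin d → ℕ) (s : Fin (d + 1)) :
    leftEnd nn s ⊆ timesBefore nn s :=
  fun _ hk => ⟨hk.1, hk.2.le⟩

lemma rightEnd_subset_timesAfter (nn : Fin d → ℕ) (s : Fin (d + 1)) :
    rightEnd nn s ⊆ timesAfter nn s :=
  fun _ hk => hk.ge

lemma leftEnd_union_rightEnd_subset_range (nn : Fin d → ℕ) (s : Fin (d + 1)) :
    leftEnd nn s ∪ rightEnd nn s ⊆ Set.range nn := by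
  rintro k (⟨hs, rfl⟩ | hk)
  · exact ⟨_, (blockLower_of_pos nn hs).symm⟩
  · by_cases hd : (s : ℕ) < d
    · rw [rightEnd, Set.mem_ofPred_eq, blockUpper_of_lt nn hd, Nat.cast_inj] at hk
      exact ⟨_, hk.symm⟩
    · simp [rightEnd, blockUpper_of_not_lt nn hd] at hk

lemma notMem_range_of_mem_blockSet (hmono : StrictMono nn) {s : Fin (d + 1)} {k : ℕ}
    (hk : k ∈ blockSet nn s) : k ∉ Set.range nn := fun hr => by
  rcases range_subset_timesBefore_union_timesAfter hmono s hr with h | h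
  · exact absurd hk.1 (not_lt.2 h.2)
  · exact absurd hk.2 (not_lt.2 h)

end Blocks

namespace UEChain

variable {d : ℕ} {nn : Fin d → ℕ}

lemma screens_timesBefore (h : UEChain μ X κ C) (hmono : StrictMono nn) (s : Fin (d + 1)) :
    Screens μ (timeSigma X (leftEnd nn s)) (timeSigma X (timesBefore nn s))
      (timeSigma X (leftEnd nn s ∪ blockSet nn s ∪ timesAfter nn s)) := by
  have : IsProbabilityMeasure μ := h.1
  have hle := timeSigma_le h.2.1
  have hsub : leftEnd nn s ⊆ leftEnd nn s ∪ blockSet nn s ∪ timesAfter nn s :=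
    Set.subset_union_left.trans Set.subset_union_left
  by_cases hs : 0 < (s : ℕ)
  · have hL : leftEnd nn s = {blockLower nn s} := by
      ext k
      simp [leftEnd, hs]
    rw [hL] at hsub ⊢
    refine ((h.screens_past (blockLower nn s)).mono_left (timeSigma_mono X fun k hk =>
      hk.2)).mono_right (timeSigma_mono X hsub) (timeSigma_mono X ?_) (hle _)
    rintro k ((rfl | hk) | hk)
    · exact Set.mem_Ici.2 le_rfl
    · exact hk.1.le
    · exact (blockLower_lt_of_mem_timesAfter hmono hs hk).le
  · exact Screens.of_le (timeSigma_mono X fun k hk => absurd hk.1 hs) (timeSigma_mono X hsub)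
      (hle _)

lemma screens_timesAfter (h : UEChain μ X κ C) (hmono : StrictMono nn) (s : Fin (d + 1)) :
    Screens μ (timeSigma X (rightEnd nn s)) (timeSigma X (timesAfter nn s))
      (timeSigma X (leftEnd nn s ∪ blockSet nn s ∪ rightEnd nn s)) := by
  have : IsProbabilityMeasure μ := h.1
  have hle := timeSigma_le h.2.1
  have hsub : rightEnd nn s ⊆ leftEnd nn s ∪ blockSet nn s ∪ rightEnd nn s :=
    Set.subset_union_right
  by_cases hd : (s : ℕ) < d
  · set b := nn ⟨s, hd⟩
    have hU : blockUpper nn s = (b : WithTop ℕ) := blockUpper_of_lt nn hd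
    have hR : rightEnd nn s = {b} := by
      ext k
      simp [rightEnd, hU]
    have hbT : b ∈ timesAfter nn s := hU.le
    rw [hR] at hsub ⊢
    refine ((h.screens_future b).mono_left (timeSigma_mono X fun k hk => ?_)).mono_right
      (timeSigma_mono X hsub) (timeSigma_mono X ?_) (hle _)
    · rwa [timesAfter, Set.mem_ofPred_eq, hU, Nat.cast_le] at hk
    · rintro k ((hk | hk) | rfl)
      · exact hk.2.le.trans (blockLower_lt_of_mem_timesAfter hmono hk.1 hbT).le
      · have hk' := hk.2
        rw [hU, Nat.cast_lt] at hk'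
        exact hk'.le
      · exact Set.mem_Iic.2 le_rfl
  · refine Screens.of_le (timeSigma_mono X fun k hk => ?_) (timeSigma_mono X hsub) (hle _)
    simp [timesAfter, blockUpper_of_not_lt nn hd] at hk

lemma condExp_prod_blocks (h : UEChain μ X κ C) (hmono : StrictMono nn)
    (g : Fin (d + 1) → Ω → ℝ) (hg : ∀ s, Measurable[timeSigma X (blockSet nn s)] (g s))
    (hb : ∀ s, ∃ B, ∀ ω, |g s ω| ≤ B) (T : Finset (Fin (d + 1))) :
    μ[∏ s ∈ T, g s | timeSigma X (Set.range nn)]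
      =ᵐ[μ] ∏ s ∈ T, μ[g s | timeSigma X (Set.range nn)] := by
  classical
  have : IsProbabilityMeasure μ := h.1
  have hle := timeSigma_le h.2.1
  have hint : ∀ s, Integrable (g s) μ := fun s => by
    obtain ⟨B, hB⟩ := hb s
    exact Integrable.of_bound ((hg s).mono (hle _) le_rfl).aestronglyMeasurable B (ae_of_all _ hB)
  induction T using Finset.induction_on with
  | empty =>
    rw [Finset.prod_empty, Finset.prod_empty]
    exact (condExp_const (hle _) (1 : ℝ)).eventuallyEq
  | insert t T ht ih =>
    rw [Finset.prod_insert ht, Finset.prod_insert ht]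
    have hblock : μ[g t | timeSigma X (timesBefore nn t ∪ timesAfter nn t)]
        =ᵐ[μ] μ[g t | timeSigma X (Set.range nn)] :=
      h.condExp_block (leftEnd_subset_timesBefore nn t) (rightEnd_subset_timesAfter nn t)
        (h.screens_timesBefore hmono t) (h.screens_timesAfter hmono t)
        (leftEnd_union_rightEnd_subset_range nn t)
        (range_subset_timesBefore_union_timesAfter hmono t) (hg t).stronglyMeasurable (hint t)
    set f := ∏ s ∈ T, g s with hf
    set 𝓔 := timeSigma X (Set.range nn)
    set 𝓗 := timeSigma X (timesBefore nn t ∪ timesAfter nn t)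
    have h𝓔𝓗 : 𝓔 ≤ 𝓗 := timeSigma_mono X (range_subset_timesBefore_union_timesAfter hmono t)
    have hfm : StronglyMeasurable[𝓗] f := by
      refine Finset.stronglyMeasurable_prod T fun s hs => ((hg s).mono (timeSigma_mono X
        (blockSet_subset_timesBefore_union_timesAfter hmono ?_)) le_rfl).stronglyMeasurable
      rintro rfl
      exact ht hs
    obtain ⟨B, hB⟩ : ∃ B, ∀ ω, ‖f ω‖ ≤ B := by
      choose B hB using hb
      refine ⟨∏ s ∈ T, B s, fun ω => ?_⟩
      rw [hf, Finset.prod_apply, Real.norm_eq_abs, Finset.abs_prod]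
      exact Finset.prod_le_prod (fun _ _ => abs_nonneg _) fun s _ => hB s ω
    have hfΩ : AEStronglyMeasurable[mΩ] f μ := (hfm.mono (hle _)).aestronglyMeasurable
    have hmul : ∀ u : Ω → ℝ, Integrable u μ → Integrable (u * f) μ := fun u hu =>
      hu.mul_bdd (c := B) hfΩ (ae_of_all _ hB)
    calc μ[g t * f | 𝓔] =ᵐ[μ] μ[μ[g t * f | 𝓗] | 𝓔] :=
          (condExp_condExp_of_le h𝓔𝓗 (hle _)).symm
      _ =ᵐ[μ] μ[μ[g t | 𝓔] * f | 𝓔] := condExp_congr_ae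
          ((condExp_mul_of_stronglyMeasurable_right hfm (hmul _ (hint t)) (hint t)).trans
            (hblock.mul (EventuallyEq.refl _ f)))
      _ =ᵐ[μ] μ[g t | 𝓔] * μ[f | 𝓔] := condExp_mul_of_stronglyMeasurable_left
          stronglyMeasurable_condExp (hmul _ integrable_condExp)
          (Integrable.of_bound hfΩ B (ae_of_all _ hB))
      _ =ᵐ[μ] _ := (EventuallyEq.refl _ _).mul ih

end UEChain

end Chain

end EdgeworthMC

namespace EdgeworthMC

variable {Ω E : Type*} [MeasurableSpace Ω] [MeasurableSpace E]

/-- Lemma 3.9, conditional chains. Write `𝓑 = {n₁ < ⋯ < n_d} ⊆ {1,…,N}`,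
`n₀ = 0`, `n_{d+1} = ∞`, and let `𝓔 = σ(X_n : n ∈ 𝓑)`. Then:
(i) the blocks `{X_n : n_s < n < n_{s+1}}`, `s = 0,…,d`, are conditionally independent
given `𝓔` (products of bounded block-measurable functions factorize under `𝔼[· | 𝓔]`); and
(ii) if `n` and `n+1` lie in the same block then the conditional transition probabilities
given `𝓔` are uniformly elliptic with constant `C⁶`:
`C⁻⁶ ℙ(X_{n+1} ∈ A | 𝓔) ≤ ℙ(X_{n+1} ∈ A | X_n, 𝓔) ≤ C⁶ ℙ(X_{n+1} ∈ A | 𝓔)` a.s.,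
i.e. the conditional transition densities satisfy `C⁻⁶ ≤ p_{n,𝓔}(x,y) ≤ C⁶`. -/
theorem conditional_chain
    (μ : Measure Ω) (X : ℕ → Ω → E) (κ : ℕ → Kernel E E)
    (C : ℝ) (hC : 1 < C) (hchain : UEChain μ X κ C)
    (N d : ℕ) (nn : Fin d → ℕ) (hmono : StrictMono nn)
    (hrange : ∀ i, nn i ∈ Finset.Icc 1 N) :
    -- (i) conditional independence of the blocks given `𝓔`
    (∀ g : Fin (d + 1) → Ω → ℝ,
      (∀ s, Measurable[blockSigma X nn s] (g s)) →
      (∀ s, ∃ B, ∀ ω, |g s ω| ≤ B) →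
      (μ[fun ω => ∏ s, g s ω | ⨆ i : Fin d, MeasurableSpace.comap (X (nn i))
          (inferInstance : MeasurableSpace E)]
        =ᵐ[μ] fun ω => ∏ s, (μ[g s | ⨆ i : Fin d, MeasurableSpace.comap (X (nn i))
          (inferInstance : MeasurableSpace E)]) ω)) ∧
    -- (ii) conditional uniform ellipticity with constant `C⁶` inside each block
    (∀ n : ℕ, (∃ s, n ∈ blockSet nn s ∧ n + 1 ∈ blockSet nn s) →
      ∀ A : Set E, MeasurableSet A →
        ∀ᵐ ω ∂μ,
          (μ[fun ω' => A.indicator (fun _ => (1 : ℝ)) (X (n + 1) ω') |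
              (⨆ i : Fin d, MeasurableSpace.comap (X (nn i))
                (inferInstance : MeasurableSpace E)) ⊔
              MeasurableSpace.comap (X n) (inferInstance : MeasurableSpace E)]) ω
            ≤ C ^ 6 * (μ[fun ω' => A.indicator (fun _ => (1 : ℝ)) (X (n + 1) ω') |
              ⨆ i : Fin d, MeasurableSpace.comap (X (nn i))
                (inferInstance : MeasurableSpace E)]) ω ∧
          (μ[fun ω' => A.indicator (fun _ => (1 : ℝ)) (X (n + 1) ω') |
              ⨆ i : Fin d, MeasurableSpace.comap (X (nn i))
                (inferInstance : MeasurableSpace E)]) ω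
            ≤ C ^ 6 * (μ[fun ω' => A.indicator (fun _ => (1 : ℝ)) (X (n + 1) ω') |
              (⨆ i : Fin d, MeasurableSpace.comap (X (nn i))
                (inferInstance : MeasurableSpace E)) ⊔
              MeasurableSpace.comap (X n) (inferInstance : MeasurableSpace E)]) ω) := by
  have hprob : IsProbabilityMeasure μ := hchain.1
  have hC0 : 0 < C := one_pos.trans hC
  refine ⟨fun g hg hb => ?_, fun n hn A hA => ?_⟩
  · have h := hchain.condExp_prod_blocks hmono g hg hb Finset.univ
    rw [timeSigma_range] at h
    simpa only [Finset.prod_fn] using h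
  · obtain ⟨s, hns, hns'⟩ := hn
    have hr : n + 1 ∉ Set.range nn := notMem_range_of_mem_blockSet hmono hns'
    have hr' : n + 1 ∉ Set.range nn ∪ {n} := by
      rintro (h | h)
      · exact hr h
      · exact n.succ_ne_self h
    have hA' : MeasurableSet[timeSigma X {n + 1}] (X (n + 1) ⁻¹' A) := by
      rw [timeSigma_singleton]
      exact ⟨A, hA, rfl⟩
    have h₁ := hchain.condExp_indicator_mem_Icc hC0 hr hA'
    have h₂ := hchain.condExp_indicator_mem_Icc hC0 hr' hA'
    rw [timeSigma_union, timeSigma_singleton, timeSigma_range] at h₂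
    rw [timeSigma_range] at h₁
    have key : ∀ {x y p : ℝ}, x ∈ Set.Icc ((C ^ 3)⁻¹ * p) (C ^ 3 * p) →
        y ∈ Set.Icc ((C ^ 3)⁻¹ * p) (C ^ 3 * p) → x ≤ C ^ 6 * y := by
      intro x y p hx hy
      calc x ≤ C ^ 3 * p := hx.2
        _ ≤ C ^ 3 * (C ^ 3 * y) := by
            gcongr
            exact (inv_mul_le_iff₀ (by positivity)).1 hy.1
        _ = C ^ 6 * y := by ring
    filter_upwards [h₁, h₂] with ω hω₁ hω₂
    exact ⟨key hω₂ hω₁, key hω₁ hω₂⟩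

end EdgeworthMC
end
end
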